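/- arXiv:2306.12178 — 6 statements merged into one kernel-verified Lean document; each statement's English description precedes it below -/
import Mathlib

section
/- Let G be a locally finite simple graph with no connected component isomorphic to the complete graph K₂. Then there exists an edge colouring of G using at most 3 colours which breaks every small automorphism of G; that is, the small distinguishing index of G satisfies D'_s(G) ≤ 3. -/
/-!
It suffices to colour one component at a time, since a small automorphism maps the component of
the vertex `v` with `v ~ φ v` to itself. Fix a root `r` in a component, and let `M` be a maximal
independent subset of the neighbourhood `U` of `r`. Split the component into the finite classes
`{r}`, `M`, `U \ M`, and the spheres of radius `2, 3, …` around `r`, ranked in this order. Every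
vertex outside `{r} ∪ M` has a neighbour of smaller rank other than `r`, its parent.

With colours `0, 1, 2`: an edge `ru` gets `1` if `u` lies in `M` and has a neighbour in `U`, and
`0` otherwise; every other edge between different classes gets `1`, except that the parent edge
of `v` gets `1 + w v` with `w v ∈ {0, 1}`; edges inside a class get arbitrary colours. Kalkowski's
argument (`exists_layer_weights`), applied to each class separately, chooses `w` and the colours
inside the class so that the sum of colours towards the same and smaller ranks, plus the number
of neighbours of larger rank, differs on adjacent vertices of the class, and is never equal to
the sum `k` of colours at `r`.

Let `φ` preserve the colouring and map the component to itself. Then `φ r = r`. Indeed, if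
`v = φ r` lies outside `{r} ∪ M`, its edges have colours at most `1`, hence exactly `1` towards
larger ranks, and the controlled sum of `v` would be `k`. If `v ∈ M`, only the edge `vr` can have
colour `0` at `v`, and comparing the colours `0` at `r` and at `v` leaves only a `K₂` component.
Once `r` is fixed, all ranks are preserved and so are the controlled sums; hence no vertex of a
class is mapped to a neighbour.
-/

/-! ### Weights on a finite set of vertices -/

open Classical in
/-- Kalkowski's argument. With vertex weights in `{0, 1}` and edge weights in `{0, 1, 2}`, the
total weights on a finite vertex set, shifted by any `b`, can be made distinct on adjacent vertices;
there is room to avoid one further value `avoid v` at each vertex. -/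
theorem exists_layer_weights {V : Type*} (G : SimpleGraph V) (avoid : V → ℕ) (F : Finset V) :
    ∀ b : V → ℕ,
    ∃ (h : Sym2 V → ℕ) (w : V → ℕ), (∀ e, h e ≤ 2) ∧ (∀ v, w v ≤ 1) ∧
      ∃ S : V → ℕ, (∀ v ∈ F, S v = b v + w v + ∑ u ∈ F with G.Adj v u, h s(v, u)) ∧
      (∀ v ∈ F, S v ≠ avoid v) ∧ ∀ u ∈ F, ∀ v ∈ F, G.Adj u v → S u ≠ S v := by
  induction F using Finset.induction_on with
  | empty => intro b; exact ⟨fun _ => 0, fun _ => 0, by simp, by simp, fun _ => 0, by simp⟩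
  | insert x F hx ih =>
    intro b
    obtain ⟨h, w, hh, hw, S, hS, hav, hadj⟩ := ih (fun y => b y + if G.Adj y x then 1 else 0)
    set N := F.filter (fun y => G.Adj x y) with hN
    set B := b x + ∑ y ∈ N, w y with hB
    -- `|N| + 2` candidate values against at most `|N| + 1` forbidden ones
    obtain ⟨t, ht, htF⟩ : ∃ t ∈ Finset.Icc B (B + N.card + 1), t ∉ insert (avoid x) (N.image S) := by
      apply Finset.exists_mem_notMem_of_card_lt_card
      have h1 := Finset.card_insert_le (avoid x) (N.image S)
      have h2 := Finset.card_image_le (s := N) (f := S)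
      rw [Nat.card_Icc]
      omega
    rw [Finset.mem_Icc] at ht
    simp only [Finset.mem_insert, Finset.mem_image, not_or, not_exists, not_and] at htF
    obtain ⟨j, e, hj, he, hje⟩ : ∃ j e, j ≤ N.card ∧ e ≤ 1 ∧ t = B + j + e := by
      by_cases h1 : t ≤ B + N.card
      · exact ⟨t - B, 0, by omega, by omega, by omega⟩
      · exact ⟨N.card, 1, by omega, by omega, by omega⟩
    obtain ⟨Y, hYN, hY⟩ := Finset.exists_subset_card_eq hj
    -- The edge `xy` gets weight `w y + δ y` and `y` the new weight `1 - δ y`: the total at `y` is the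
    -- one obtained from `w y` and an edge of weight `1`, while the total at `x` grows with `∑ δ`.
    let δ : V → ℕ := fun y => if y ∈ Y then 1 else 0
    have hδ : ∀ y, δ y ≤ 1 := fun y => by simp only [δ]; split_ifs <;> omega
    let w' : V → ℕ := fun y => if y = x then e else if y ∈ N then 1 - δ y else w y
    have hsymm : ∀ a c : V, (if a = x then w c + δ c else if c = x then w a + δ a else h s(a, c))
        = (if c = x then w a + δ a else if a = x then w c + δ c else h s(c, a)) := by
      intro a c
      by_cases h1 : a = x <;> by_cases h2 : c = x <;> simp [h1, h2, Sym2.eq_swap]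
    let h' : Sym2 V → ℕ := Sym2.lift ⟨_, hsymm⟩
    have h'v : ∀ a c : V, h' s(a, c) =
      if a = x then w c + δ c else if c = x then w a + δ a else h s(a, c) := fun a c => rfl
    refine ⟨h', w', ?_, ?_, fun y => if y = x then t else S y, ?_, ?_, ?_⟩
    · intro e
      induction e with | _ a c =>
      rw [h'v]
      have := hw a; have := hw c; have := hδ a; have := hδ c; have := hh s(a, c)
      split_ifs <;> omega
    · intro v
      have := hw v
      simp only [w']
      split_ifs <;> omega
    · intro v hv
      rw [Finset.filter_insert]
      by_cases hvx : v = x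
      · subst hvx
        simp only [if_true, SimpleGraph.irrefl, if_false, h'v, w']
        rw [← hN, Finset.sum_add_distrib, hje, hB]
        have : ∑ y ∈ N, δ y = j := by
          simp only [δ]
          rw [Finset.sum_ite_mem, Finset.inter_eq_right.2 hYN]
          simp [hY]
        omega
      · have hvF : v ∈ F := by simpa [hvx] using hv
        have hsum : ∑ u ∈ F with G.Adj v u, h' s(v, u) = ∑ u ∈ F with G.Adj v u, h s(v, u) := by
          apply Finset.sum_congr rfl
          intro u hu
          have : u ≠ x := by rintro rfl; exact hx (Finset.mem_filter.1 hu).1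
          simp [h'v, hvx, this]
        have hSv := hS v hvF
        simp only [hvx, if_false]
        by_cases ha : G.Adj v x
        · have hvN : v ∈ N := by simp [hN, hvF, ha.symm]
          rw [if_pos ha, Finset.sum_insert (by simp [hx]), hsum]
          simp only [ha, if_true] at hSv
          have h1 : w' v = 1 - δ v := by simp [w', hvx, hvN]
          have h2 : h' s(v, x) = w v + δ v := by simp [h'v, hvx]
          have := hδ v
          rw [h1, h2]
          omega
        · have hvN : v ∉ N := by
            simp only [hN, Finset.mem_filter, not_and]
            exact fun _ h => ha h.symm
          rw [if_neg ha, hsum]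
          simp only [ha, if_false] at hSv
          simp [w', hvx, hvN, hSv]
    · intro v hv
      by_cases hvx : v = x
      · subst hvx; simpa using htF.1
      · simpa [hvx] using hav v (by simpa [hvx] using hv)
    · intro u hu v hv huv
      by_cases hux : u = x <;> by_cases hvx : v = x
      · subst hux; subst hvx; exact absurd huv (by simp)
      · have hvF : v ∈ F := by simpa [hvx] using hv
        subst hux
        simp only [if_true, hvx, if_false]
        exact fun h => htF.2 v (by simp [hN, hvF, huv]) h.symm
      · have huF : u ∈ F := by simpa [hux] using hu
        subst hvx
        simp only [if_true, hux, if_false]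
        exact fun h => htF.2 u (by simp [hN, huF, huv.symm]) h
      · simp only [hux, hvx, if_false]
        exact hadj u (by simpa [hux] using hu) v (by simpa [hvx] using hv) huv

/-! ### Auxiliary facts on graphs -/

theorem exists_adj_dist_eq {V : Type*} {G : SimpleGraph V} {r v : V} {n : ℕ}
    (hr : G.Reachable r v) (hd : G.dist r v = n + 1) :
    ∃ p, G.Adj v p ∧ G.Reachable r p ∧ G.dist r p = n := by
  obtain ⟨q, hq⟩ := hr.symm.exists_walk_length_eq_dist
  rw [SimpleGraph.dist_comm, hd] at hq
  cases q with
  | nil => simp at hq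
  | @cons _ p _ h q =>
    refine ⟨p, h, q.reachable.symm, ?_⟩
    have h1 := SimpleGraph.dist_le q
    rw [SimpleGraph.Walk.length_cons] at hq
    obtain ⟨q', hq'⟩ := q.reachable.exists_walk_length_eq_dist
    have h2 := SimpleGraph.dist_le (SimpleGraph.Walk.cons h q')
    rw [SimpleGraph.Walk.length_cons, SimpleGraph.dist_comm, hd] at h2
    rw [SimpleGraph.dist_comm]
    omega

theorem finite_dist_eq {V : Type*} (G : SimpleGraph V)
    (hlf : ∀ v : V, (G.neighborSet v).Finite) (r : V) (n : ℕ) :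
    {v | G.Reachable r v ∧ G.dist r v = n}.Finite := by
  induction n with
  | zero =>
    refine (Set.finite_singleton r).subset ?_
    rintro v ⟨h1, h2⟩
    exact (h1.dist_eq_zero_iff.1 h2).symm
  | succ n ih =>
    refine (ih.biUnion fun p _ => hlf p).subset ?_
    rintro v ⟨h1, h2⟩
    obtain ⟨p, hp, hp1, hp2⟩ := exists_adj_dist_eq h1 h2
    exact Set.mem_biUnion (show p ∈ {v | _} from ⟨hp1, hp2⟩) hp.symm

theorem dist_iso {V : Type*} {G : SimpleGraph V} (φ : G ≃g G) {u v : V} (h : G.Reachable u v) :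
    G.dist (φ u) (φ v) = G.dist u v := by
  have key : ∀ (ψ : G ≃g G) {a b : V}, G.Reachable a b → G.dist (ψ a) (ψ b) ≤ G.dist a b := by
    intro ψ a b hab
    obtain ⟨q, hq⟩ := hab.exists_walk_length_eq_dist
    have := SimpleGraph.dist_le (q.map ψ.toHom)
    rw [SimpleGraph.Walk.length_map, hq] at this
    exact this
  refine le_antisymm (key φ h) ?_
  have := key φ.symm (SimpleGraph.Iso.reachable_iff (φ := φ) |>.2 h)
  simpa using this

theorem exists_maximal_independent {V : Type*} (G : SimpleGraph V) (U : Set V) (hU : U.Finite) :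
    ∃ M ⊆ U, (∀ a ∈ M, ∀ b ∈ M, ¬ G.Adj a b) ∧ ∀ u ∈ U, u ∉ M → ∃ a ∈ M, G.Adj u a := by
  have hfin : {M : Set V | M ⊆ U ∧ ∀ a ∈ M, ∀ b ∈ M, ¬ G.Adj a b}.Finite :=
    hU.finite_subsets.subset fun M hM => hM.1
  obtain ⟨M, hM⟩ := hfin.exists_maximal ⟨∅, by simp⟩
  refine ⟨M, hM.prop.1, hM.prop.2, fun u hu huM => ?_⟩
  by_contra! hcon
  refine huM (hM.le_of_ge (y := insert u M) ⟨?_, ?_⟩ (Set.subset_insert u M) (Set.mem_insert u M))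
  · exact Set.insert_subset hu hM.prop.1
  · rintro a (rfl | ha) b (rfl | hb)
    · simp
    · exact hcon b hb
    · exact fun h => hcon a ha h.symm
    · exact hM.prop.2 a ha b hb

theorem nonempty_iso_top {V : Type*} (G : SimpleGraph V) {r v : V}
    (hr : ∀ u, G.Adj r u ↔ u = v) (hv : ∀ u, G.Adj v u ↔ u = r) :
    Nonempty ((G.induce (G.connectedComponentMk r).supp) ≃g (⊤ : SimpleGraph (Fin 2))) := by
  have hrv : G.Adj r v := (hr v).2 rfl
  have hsupp : (G.connectedComponentMk r).supp = {r, v} := by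
    ext x
    rw [SimpleGraph.ConnectedComponent.mem_supp_iff, SimpleGraph.ConnectedComponent.eq]
    constructor
    · intro h
      rw [SimpleGraph.reachable_comm, SimpleGraph.reachable_iff_reflTransGen] at h
      induction h with
      | refl => simp
      | tail _ h ih =>
        rcases ih with rfl | rfl
        · exact Or.inr ((hr _).1 h)
        · exact Or.inl ((hv _).1 h)
    · rintro (rfl | rfl)
      · rfl
      · exact hrv.symm.reachable
  rw [hsupp]
  have hcard : Nat.card ({r, v} : Set V) = 2 := by
    rw [Nat.card_coe_set_eq, Set.ncard_pair hrv.ne]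
  have : Finite ({r, v} : Set V) := Set.toFinite _
  refine ⟨⟨Finite.equivFinOfCardEq hcard, ?_⟩⟩
  rintro ⟨a, ha⟩ ⟨b, hb⟩
  rcases ha with rfl | rfl <;> rcases hb with rfl | rfl <;>
    simp [hrv, hrv.symm, Subtype.ext_iff, G.ne_of_adj]

/-! ### Colouring a component -/

open Classical in
/-- A colouring that breaks every automorphism moving some vertex of the component of `r` to a
neighbour, and does so on an edge of this component. -/
theorem exists_component_colouring {V : Type*} (G : SimpleGraph V)
    (hlf : ∀ v : V, (G.neighborSet v).Finite) (r : V)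
    (hK2 : ¬ Nonempty ((G.induce (G.connectedComponentMk r).supp) ≃g (⊤ : SimpleGraph (Fin 2)))) :
    ∃ c : Sym2 V → ℕ, (∀ e, c e ≤ 2) ∧
      ∀ φ : G ≃g G, (∃ v, G.Reachable r v ∧ G.Adj v (φ v)) →
        ∃ u v, G.Reachable r u ∧ G.Adj u v ∧ c s(u, v) ≠ c s(φ u, φ v) := by
  obtain ⟨M, hMU, hMind, hMmax⟩ := exists_maximal_independent G (G.neighborSet r) (hlf r)
  -- the vertices joined to `r` by colour `1`
  let R : Set V := {u | u ∈ M ∧ ∃ y, G.Adj r y ∧ G.Adj u y}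
  -- the rank: `r ↦ 0`, `M ↦ 2`, `U \ M ↦ 3`, and the sphere of radius `i ≥ 2` gets `2 * i`
  let ρ : V → ℕ := fun v => 2 * G.dist r v + if G.Adj r v ∧ v ∉ M then 1 else 0
  have hrr : r ∉ M := fun h => G.irrefl (hMU h)
  have hρM : ∀ u ∈ M, ρ u = 2 := by
    intro u hu
    have : G.dist r u = 1 := SimpleGraph.dist_eq_one_iff_adj.2 (hMU hu)
    simp [ρ, this, hu]
  have hρU : ∀ u, G.Adj r u → u ∉ M → ρ u = 3 := by
    intro u hu huM
    have : G.dist r u = 1 := SimpleGraph.dist_eq_one_iff_adj.2 hu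
    simp [ρ, this, hu, huM]
  have hρfar : ∀ u, ¬ G.Adj r u → ρ u = 2 * G.dist r u := by
    intro u hu; simp [ρ, hu]
  have hρr : ρ r = 0 := by rw [hρfar r (G.irrefl)]; simp
  have hρ3 : ∀ u, G.Reachable r u → u ≠ r → u ∉ M → 3 ≤ ρ u := by
    intro u hu hur huM
    by_cases ha : G.Adj r u
    · exact (hρU u ha huM).ge
    · have := hu.one_lt_dist_of_ne_of_not_adj hur.symm ha
      rw [hρfar u ha]; omega
  have hpar : ∀ v, ∃ p, G.Reachable r v → 3 ≤ ρ v → G.Adj v p ∧ ρ p < ρ v ∧ p ≠ r := by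
    intro v
    by_cases hv : G.Reachable r v ∧ 3 ≤ ρ v
    swap
    · exact ⟨v, fun h1 h2 => absurd ⟨h1, h2⟩ hv⟩
    obtain ⟨hv, hv3⟩ := hv
    by_cases ha : G.Adj r v
    · have hvM : v ∉ M := fun h => by have := hρM v h; omega
      obtain ⟨a, haM, hva⟩ := hMmax v ha hvM
      refine ⟨a, fun _ _ => ⟨hva, ?_, fun h => hrr (h ▸ haM)⟩⟩
      rw [hρM a haM]; omega
    · have hd := hρfar v ha
      obtain ⟨n, hn⟩ : ∃ n, G.dist r v = n + 1 := ⟨G.dist r v - 1, by omega⟩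
      obtain ⟨p, hp, hp1, hp2⟩ := exists_adj_dist_eq hv hn
      refine ⟨p, fun _ _ => ⟨hp, ?_, ?_⟩⟩
      · have : ρ p ≤ 2 * G.dist r p + 1 := by simp only [ρ]; split_ifs <;> omega
        omega
      · rintro rfl
        exact ha hp.symm
  choose p hp using hpar
  let N : V → Finset V := fun v => (hlf v).toFinset
  have hN : ∀ v u, u ∈ N v ↔ G.Adj v u := fun v u => by simp [N]
  have hFfin : ∀ n, {v | G.Reachable r v ∧ ρ v = n}.Finite := by
    intro n
    refine (finite_dist_eq G hlf r (n / 2)).subset ?_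
    rintro v ⟨h1, h2⟩
    refine ⟨h1, ?_⟩
    simp only [ρ] at h2
    split_ifs at h2 <;> omega
  let F : ℕ → Finset V := fun n => (hFfin n).toFinset
  have hF : ∀ n v, v ∈ F n ↔ G.Reachable r v ∧ ρ v = n := fun n v => by simp [F]
  let k := ((N r).filter (· ∈ R)).card
  let b : V → ℕ := fun v => ((N v).filter (fun u => ρ u ≠ ρ v ∧ u ≠ r)).card
  choose h w hh hw S hS hSk hSadj using fun n => exists_layer_weights G (fun _ => k) (F n) b
  let g : V → V → ℕ := fun u v =>
    if u = r then (if v ∈ R then 1 else 0)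
    else if v = r then (if u ∈ R then 1 else 0)
    else if ρ u = ρ v then h (ρ u) s(u, v)
    else if ρ u < ρ v then 1 + (if u = p v then w (ρ v) v else 0)
    else 1 + (if v = p u then w (ρ u) u else 0)
  have hg : ∀ u v, g u v = g v u := by
    intro u v
    simp only [g]
    by_cases h1 : u = r
    · by_cases h2 : v = r
      · simp [h1, h2]
      · simp [h1, h2]
    · by_cases h2 : v = r
      · simp [h1, h2]
      · rcases lt_trichotomy (ρ u) (ρ v) with h3 | h3 | h3
        · simp [h1, h2, h3, h3.ne, h3.ne', h3.not_gt]
        · simp [h1, h2, h3, Sym2.eq_swap]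
        · simp [h1, h2, h3, h3.ne, h3.ne', h3.not_gt]
  let c : Sym2 V → ℕ := Sym2.lift ⟨g, hg⟩
  have hc : ∀ u v, c s(u, v) = g u v := fun _ _ => rfl
  have hcr : ∀ u, c s(r, u) = if u ∈ R then 1 else 0 := fun u => by simp [hc, g]
  have hrR : r ∉ R := fun h => hrr h.1
  -- every edge avoiding `r` between different ranks has a nonzero colour
  have hpos : ∀ u v, u ≠ r → v ≠ r → ρ u ≠ ρ v → 1 ≤ c s(u, v) := by
    intro u v hu hv huv
    simp only [hc, g, hu, hv, huv, if_false]
    split_ifs <;> omega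
  have hle : ∀ e, c e ≤ 2 := by
    intro e
    induction e with | _ u v =>
    have h1 := hw (ρ v) v
    have h2 := hw (ρ u) u
    have h3 := hh (ρ u) s(u, v)
    simp only [hc, g]
    split_ifs <;> omega
  -- the total weight of `v` in its class, expressed through the colouring and the ranks only
  have hQ : ∀ v, G.Reachable r v → v ≠ r → v ∉ M →
      ∑ u ∈ N v, (if ρ u ≤ ρ v then c s(v, u) else 1) = S (ρ v) v := by
    intro v hv hvr hvM
    have hv3 := hρ3 v hv hvr hvM
    obtain ⟨hp1, hp2, hp3⟩ := hp v hv hv3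
    have hvR : v ∉ R := fun h => hvM h.1
    rw [hS (ρ v) v ((hF _ _).2 ⟨hv, rfl⟩)]
    have hterm : ∀ u ∈ N v, (if ρ u ≤ ρ v then c s(v, u) else 1) =
        (if ρ u ≠ ρ v ∧ u ≠ r then 1 else 0) + (if p v = u then w (ρ v) v else 0) +
          (if ρ u = ρ v then h (ρ v) s(v, u) else 0) := by
      intro u hu
      by_cases hur : u = r
      · subst hur
        simp [hc, g, hvr, hvR, hρr, hp3]; omega
      · rcases lt_trichotomy (ρ u) (ρ v) with h3 | h3 | h3
        · simp [hc, g, hvr, hur, h3.le, h3.ne, h3.ne', h3.not_gt, eq_comm (a := p v)]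
        · have : p v ≠ u := by rintro rfl; omega
          simp [hc, g, hvr, hur, h3, this]
        · have : p v ≠ u := by rintro rfl; omega
          simp [h3.not_ge, h3.ne', this, hur]
    rw [Finset.sum_congr rfl hterm, Finset.sum_add_distrib, Finset.sum_add_distrib,
      Finset.sum_ite_eq, if_pos ((hN _ _).2 hp1), ← Finset.card_filter, ← Finset.sum_filter]
    congr 1
    apply Finset.sum_congr _ fun _ _ => rfl
    ext u
    simp only [Finset.mem_filter, hN, hF]
    constructor
    · rintro ⟨h1, h2⟩
      exact ⟨⟨hv.trans h1.reachable, h2⟩, h1⟩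
    · rintro ⟨⟨_, h2⟩, h1⟩
      exact ⟨h1, h2⟩
  refine ⟨c, hle, ?_⟩
  rintro φ ⟨v₀, hv₀, hsmall⟩
  by_contra! hpres
  have hreach : ∀ v, G.Reachable r v → G.Reachable r (φ v) := by
    intro v hv
    have h1 : G.Reachable (φ v₀) (φ v) := SimpleGraph.Iso.reachable_iff.2 (hv₀.symm.trans hv)
    exact (hv₀.trans hsmall.reachable).trans h1
  have hNφ : ∀ v, N (φ v) = (N v).map φ.toEquiv.toEmbedding := by
    intro v
    ext u
    simp only [Finset.mem_map, hN]
    constructor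
    · intro hu
      exact ⟨φ.symm u, by rw [← φ.map_adj_iff]; simpa using hu, by simp⟩
    · rintro ⟨x, hx, rfl⟩
      exact φ.map_adj_iff.2 hx
  have hr0 : G.Reachable r r := SimpleGraph.Reachable.refl r
  have hpr : ∀ u, G.Adj r u → c s(φ r, φ u) = if u ∈ R then 1 else 0 := by
    intro u hu
    rw [← hpres r u hr0 hu, hcr]
  have hfix : φ r = r := by
    by_contra hne
    set v := φ r with hv
    have hvreach : G.Reachable r v := hreach r hr0
    by_cases hvM : v ∈ M
    · have hvr : G.Adj v r := (hMU hvM).symm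
      -- a neighbour of `v` other than `r` has rank at least three, while `v` has rank two
      have hnb : ∀ u, G.Adj v u → u ≠ r → 1 ≤ c s(v, u) := by
        intro u hu hur
        apply hpos v u hne hur
        have huM : u ∉ M := fun h => hMind v hvM u h hu
        have := hρ3 u (hvreach.trans hu.reachable) hur huM
        rw [hρM v hvM]; omega
      have hzero : ∀ u, G.Adj r u → u ∉ R → φ u = r := by
        intro u hu huR
        by_contra hur
        have h1 := hnb (φ u) (φ.map_adj_iff.2 hu) hur
        rw [hpr u hu, if_neg huR] at h1
        omega
      by_cases hvR : v ∈ R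
      · obtain ⟨_, u', hu', hvu'⟩ := hvR
        have hu'M : u' ∉ M := fun h => hMind v hvM u' h hvu'
        have h1 := hzero u' hu' fun h => hu'M h.1
        have h2 := hpr u' hu'
        rw [h1, Sym2.eq_swap, hcr, if_pos ⟨hvM, u', hu', hvu'⟩, if_neg fun h => hu'M h.1] at h2
        omega
      · -- two edges of colour `0` at `r` would both be mapped to `vr`, so `v` is the only neighbour
        have hvv := hzero v hvr.symm hvR
        have huniq : ∀ u, G.Adj r u → u = v := by
          intro u hu
          by_contra huv
          by_cases huR : u ∈ R
          · obtain ⟨huM, u', hu', huu'⟩ := huR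
            have hu'M : u' ∉ M := fun h => hMind u huM u' h huu'
            have h1 := hzero u' hu' fun h => hu'M h.1
            have : u' = v := φ.injective (h1.trans hvv.symm)
            exact hu'M (this ▸ hvM)
          · exact huv (φ.injective ((hzero u hu huR).trans hvv.symm))
        refine hK2 (nonempty_iso_top G (v := v) (fun u => ⟨huniq u, ?_⟩) (fun u => ⟨?_, ?_⟩))
        · rintro rfl; exact hvr.symm
        · intro hu
          have h1 : G.Adj r (φ.symm u) := by
            rw [← φ.map_adj_iff]; simpa using hu
          have h2 := huniq _ h1
          rw [← hvv, ← h2]; simp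
        · rintro rfl; exact hvr
    · -- towards larger ranks the colours are nonzero and at most `1`, so the total of `v` is `k`
      have hsum : ∑ u ∈ N v, c s(v, u) = k := by
        rw [hv, hNφ, Finset.sum_map]
        simp only [k]
        rw [Finset.card_filter]
        exact Finset.sum_congr rfl fun u hu => hpr u ((hN _ _).1 hu)
      refine hSk (ρ v) v ((hF _ _).2 ⟨hvreach, rfl⟩) ?_
      rw [← hQ v hvreach hne hvM, ← hsum]
      apply Finset.sum_congr rfl
      intro u hu
      split_ifs with hlt
      · rfl
      · have hvu : G.Adj v u := (hN _ _).1 hu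
        have hur : u ≠ r := by rintro rfl; omega
        have h1 := hpos v u hne hur (by omega)
        have h2 : c s(v, u) ≤ 1 := by
          have h3 : G.Adj r (φ.symm u) := by
            rw [← φ.map_adj_iff]; simpa using hvu
          have h4 := hpr _ h3
          rw [φ.apply_symm_apply] at h4
          rw [h4]; split_ifs <;> omega
        omega
  have hadjr : ∀ u, G.Adj r (φ u) ↔ G.Adj r u := by
    intro u
    conv_lhs => rw [← hfix]
    exact φ.map_adj_iff
  have hM : ∀ u, φ u ∈ M ↔ u ∈ M := by
    intro u
    by_cases hu : G.Adj r u
    swap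
    · exact ⟨fun h => absurd ((hadjr u).1 (hMU h)) hu, fun h => absurd (hMU h) hu⟩
    have hR : φ u ∈ R ↔ u ∈ R := by
      have h1 := hpr u hu
      rw [hfix, hcr] at h1
      by_cases h2 : φ u ∈ R <;> by_cases h3 : u ∈ R <;>
        simp only [h2, h3, if_true, if_false] at h1 ⊢ <;> omega
    have hex : (∃ u', G.Adj r u' ∧ G.Adj (φ u) u') ↔ ∃ u', G.Adj r u' ∧ G.Adj u u' := by
      constructor
      · rintro ⟨u', h1, h2⟩
        refine ⟨φ.symm u', ?_, ?_⟩
        · rw [← hadjr]; simpa using h1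
        · rw [← φ.map_adj_iff]; simpa using h2
      · rintro ⟨u', h1, h2⟩
        exact ⟨φ u', (hadjr u').2 h1, φ.map_adj_iff.2 h2⟩
    -- `R` is visible in the colours at `r`, and a vertex isolated in the neighbourhood of `r` is
    -- in `M` by maximality
    by_cases he : ∃ u', G.Adj r u' ∧ G.Adj u u'
    · exact ⟨fun h => (hR.1 ⟨h, hex.2 he⟩).1, fun h => (hR.2 ⟨h, he⟩).1⟩
    · have key : ∀ x, G.Adj r x → (¬ ∃ u', G.Adj r u' ∧ G.Adj x u') → x ∈ M := by
        intro x hx hnx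
        by_contra hxM
        obtain ⟨a, ha, hxa⟩ := hMmax x hx hxM
        exact hnx ⟨a, hMU ha, hxa⟩
      exact ⟨fun _ => key u hu he, fun _ => key (φ u) ((hadjr u).2 hu) fun h => he (hex.1 h)⟩
  have hρφ : ∀ u, G.Reachable r u → ρ (φ u) = ρ u := by
    intro u hu
    have h1 := dist_iso φ hu
    rw [hfix] at h1
    simp only [ρ, h1, hadjr, hM]
  have hv₀r : v₀ ≠ r := by
    rintro rfl
    rw [hfix] at hsmall
    exact G.irrefl hsmall
  by_cases hv₀M : v₀ ∈ M
  · exact hMind v₀ hv₀M _ ((hM v₀).2 hv₀M) hsmall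
  have hφr : φ v₀ ≠ r := fun h => hv₀r (φ.injective (h.trans hfix.symm))
  refine hSadj (ρ v₀) v₀ ((hF _ _).2 ⟨hv₀, rfl⟩) (φ v₀)
    ((hF _ _).2 ⟨hreach _ hv₀, hρφ _ hv₀⟩) hsmall ?_
  have h1 := hQ v₀ hv₀ hv₀r hv₀M
  have h2 := hQ (φ v₀) (hreach _ hv₀) hφr (fun h => hv₀M ((hM v₀).1 h))
  rw [hρφ v₀ hv₀] at h2
  rw [← h1, ← h2, hNφ, Finset.sum_map]
  apply Finset.sum_congr rfl
  intro u hu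
  have hvu : G.Adj v₀ u := (hN _ _).1 hu
  have h3 := hρφ u (hv₀.trans hvu.reachable)
  change _ = if ρ (φ u) ≤ ρ v₀ then c s(φ v₀, φ u) else 1
  rw [h3, hpres v₀ u hv₀ hvu]

/-- Non-list corollary: every locally finite graph with no `K₂` component admits an edge
colouring with at most 3 colours breaking every small automorphism; i.e. `D'_s(G) ≤ 3`. -/
theorem stmt_2 {V : Type*} (G : SimpleGraph V)
    (hlf : ∀ v : V, (G.neighborSet v).Finite)
    (hK2 : ∀ K : G.ConnectedComponent,
      ¬ Nonempty ((G.induce K.supp) ≃g (⊤ : SimpleGraph (Fin 2)))) :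
    ∃ c : Sym2 V → Fin 3,
      ∀ φ : G ≃g G, (∃ v, G.Adj v (φ v)) →
        ∃ u v, G.Adj u v ∧ c s(u, v) ≠ c s(φ u, φ v) := by
  choose c hle hc using fun r => exists_component_colouring G hlf r (hK2 _)
  let root : V → V := fun v => (G.connectedComponentMk v).out
  have hroot : ∀ v, G.Reachable (root v) v := fun v =>
    SimpleGraph.ConnectedComponent.exact (Quot.out_eq (G.connectedComponentMk v))
  have hrooteq : ∀ u v, G.Reachable u v → root u = root v := fun u v h => by
    simp only [root, SimpleGraph.ConnectedComponent.sound h]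
  -- on an edge both ends have the same root, so the choice of an end is immaterial
  have hedge : ∀ u v, G.Adj u v → root (Quot.out s(u, v)).1 = root u := by
    intro u v huv
    have h1 : (Quot.out s(u, v)).1 ∈ s(u, v) := Sym2.out_fst_mem _
    rcases Sym2.mem_iff.1 h1 with h | h
    · rw [h]
    · rw [h]; exact hrooteq _ _ huv.symm.reachable
  refine ⟨fun e => ⟨c (root (Quot.out e).1) e, Nat.lt_succ_of_le (hle _ _)⟩, ?_⟩
  rintro φ ⟨v, hv⟩
  obtain ⟨x, y, hx, hxy, hne⟩ := hc (root v) φ ⟨v, hroot v, hv⟩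
  refine ⟨x, y, hxy, fun heq => hne ?_⟩
  have hvx : G.Reachable v x := (hroot v).symm.trans hx
  have h1 : root x = root v := hrooteq _ _ hvx.symm
  have h2 : root (φ x) = root v := by
    apply hrooteq
    exact (hv.reachable.trans (SimpleGraph.Iso.reachable_iff.2 hvx)).symm
  have := congrArg Fin.val heq
  simpa only [hedge x y hxy, hedge _ _ (φ.map_adj_iff.2 hxy), h1, h2] using this
end

section
/- Let G be a locally finite simple graph with no connected component isomorphic to the complete graph K₂. Suppose each vertex x of G is assigned a list L_x of colours with |L_x| = 2 and each edge e of G is assigned a list L_e of colours with |L_e| = 2. Then there exists a total colouring of G (an assignment of a colour from L_x to each vertex x and a colour from L_e to each edge e) which breaks every small automorphism of G, meaning that for every small automorphism φ of G either some vertex v satisfies c(v) ≠ c(φ(v)) or some edge {u,v} satisfies c({u,v}) ≠ c({φ(u),φ(v)}). -/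
/-!
Choose a root in every connected component and split the component into its distance layers.
An automorphism that preserves the component and fixes its root preserves each layer, so if it maps
a vertex to a neighbour, it restricts to a small automorphism of the subgraph induced on a layer
not containing the root. In a finite graph these layers are smaller than the graph, and in a locally
finite graph they are finite. Hence one step suffices (`exists_good_of_layers`), used in an induction
for finite graphs (`hasGood_finite`) and once more for the given graph:
colour the layers (vertices and the edges inside them) so that their small automorphisms are broken,
then use the remaining edges, those between consecutive layers, and the colours of the roots, to
make sure that a colour-preserving automorphism that preserves a component fixes its root.

For the latter, embed the colours into a linearly ordered group and let the weight of a vertex be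
the sum of the colours of the edges at it. Every non-root vertex `y` having the colour of its root
`r` must get a weight different from that of `r` (`exists_separating`). The colour of `r` is chosen
so that at most half of its neighbours share it, hence each neighbour `x` sharing it can be matched
with a private neighbour `g x` of `r` not sharing it. Each constrained `y` now owns an edge: if `y`
is at distance at least two from `r`, the edge to a parent of `y`, initially of the lower colour of
its list; if `y` is a neighbour of `r`, the edge `r (g y)`, initially of the higher colour. Switching
any set of these edges never decreases the weight of any constrained vertex and never increases the
weight of a root, and switching the edge owned by `y` strictly increases the difference at `y`. Thus
`W ↦ {y | weight of the root of y ≤ weight of y, after switching the edges owned by W}` is monotone,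
and for its least fixed point `W` no `y` has the weight of its root: such a `y` would lie in `W`,
and `W \ {y}` would be a smaller pre-fixed point.
-/

namespace SmallAut

open SimpleGraph

variable {V C : Type*}

/-! ### Distances in a graph -/

lemma exists_parent (H : SimpleGraph V) {r y : V} (h : H.Reachable r y) {k : ℕ}
    (hk : H.dist r y = k + 1) : ∃ p, H.Adj y p ∧ H.Reachable r p ∧ H.dist r p = k := by
  obtain ⟨q, hq⟩ := h.symm.exists_walk_length_eq_dist
  rw [dist_comm, hk] at hq
  cases q with
  | nil => simp at hq
  | @cons _ p _ hadj q =>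
    have hq' : q.length = k := by simpa using hq
    refine ⟨p, hadj, q.reachable.symm, ?_⟩
    have h1 : H.dist r p ≤ k := by
      rw [dist_comm, ← hq']; exact dist_le q
    obtain ⟨q2, hq2⟩ := q.reachable.exists_walk_length_eq_dist
    have h2 : H.dist y r ≤ (Walk.cons hadj q2).length := dist_le _
    rw [dist_comm, hk, Walk.length_cons, hq2, dist_comm] at h2
    omega

lemma dist_map_le {H : SimpleGraph V} (φ : H ≃g H) {u v : V} (h : H.Reachable u v) :
    H.dist (φ u) (φ v) ≤ H.dist u v := by
  obtain ⟨q, hq⟩ := h.exists_walk_length_eq_dist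
  rw [← hq, ← Walk.length_map φ.toHom q]
  exact dist_le _

lemma dist_map {H : SimpleGraph V} (φ : H ≃g H) {u v : V} (h : H.Reachable u v) :
    H.dist (φ u) (φ v) = H.dist u v := by
  refine le_antisymm (dist_map_le φ h) ?_
  have := dist_map_le φ.symm (Iso.reachable_iff (φ := φ) |>.2 h)
  simpa using this

lemma layer_finite (H : SimpleGraph V) (hlf : ∀ v, (H.neighborSet v).Finite) (r : V) (k : ℕ) :
    {u | H.Reachable r u ∧ H.dist r u = k}.Finite := by
  induction k with
  | zero =>
    refine (Set.finite_singleton r).subset ?_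
    rintro u ⟨h1, h2⟩
    exact (h1.dist_eq_zero_iff.1 h2).symm
  | succ k ih =>
    refine (ih.biUnion fun p _ => hlf p).subset ?_
    rintro u ⟨h1, h2⟩
    obtain ⟨p, hp, hr, hd⟩ := exists_parent H h1 h2
    exact Set.mem_biUnion (x := p) ⟨hr, hd⟩ hp.symm

/-! ### Separating the roots from the other vertices -/

/-- The sum of the weights of the colours of the edges at `v`. -/
noncomputable def weight {R : Type*} [AddCommMonoid R] (H : SimpleGraph V)
    (hlf : ∀ v, (H.neighborSet v).Finite) (w : C → R) (ce : Sym2 V → C) (v : V) : R :=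
  ∑ u ∈ (hlf v).toFinset, w (ce s(v, u))

open Classical in
/-- The edge colouring after switching the edges owned by the constrained vertices in `W`. Here `d`
is the distance from the root, `Y` the set of constrained vertices, and `y` owns `s(root y, g y)` if
it is adjacent to its root, and `s(y, p y)` otherwise. Edges inside a layer keep the colour `base`;
edges at a root are `hi` until switched to `lo`, other edges are `lo` until switched to `hi`. -/
noncomputable def switched (H : SimpleGraph V) (root : V → V) (d : V → ℕ) (Y : Set V)
    (g p : V → V) (base lo hi : Sym2 V → C) (W : Set V) (e : Sym2 V) : C :=
  if ∃ u v, e = s(u, v) ∧ d u = d v then base e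
  else if ∃ r ∈ e, root r = r then
    if ∃ x ∈ W, x ∈ Y ∧ H.Adj (root x) x ∧ e = s(root x, g x) then lo e else hi e
  else
    if ∃ y ∈ W, y ∈ Y ∧ ¬ H.Adj (root y) y ∧ e = s(y, p y) then hi e else lo e

/-- Colours `lo` and `hi` can be distributed on the edges between layers, keeping `base` inside the
layers, so that no vertex other than the root of its component agrees with this root both in colour
and in weight. The map `g` matches the neighbours of a root that have its colour with distinct
neighbours that do not. The colouring is `switched` for the least fixed point described above. -/
theorem exists_separating {R : Type*} [AddCommMonoid R] [LinearOrder R]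
    [IsOrderedCancelAddMonoid R] (H : SimpleGraph V)
    (hlf : ∀ v, (H.neighborSet v).Finite) (w : C → R) (root : V → V)
    (hroot : ∀ v, H.Reachable (root v) v)
    (hconst : ∀ u v, H.Reachable u v → root u = root v)
    (cv : V → C) (base lo hi : Sym2 V → C)
    (hlohi : ∀ e ∈ H.edgeSet, w (lo e) < w (hi e))
    (g : V → V)
    (hg : ∀ x, H.Adj (root x) x → cv x = cv (root x) →
      H.Adj (root x) (g x) ∧ cv (g x) ≠ cv (root x))
    (hginj : ∀ x x', H.Adj (root x) x → cv x = cv (root x) → H.Adj (root x') x' →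
      cv x' = cv (root x') → root x = root x' → g x = g x' → x = x') :
    ∃ ce : Sym2 V → C,
      (∀ e, ce e = lo e ∨ ce e = hi e ∨ ce e = base e) ∧
      (∀ u v, H.dist (root u) u = H.dist (root v) v → ce s(u, v) = base s(u, v)) ∧
      ∀ y, y ≠ root y → cv y = cv (root y) →
        weight H hlf w ce y ≠ weight H hlf w ce (root y) := by
  classical
  set d : V → ℕ := fun v => H.dist (root v) v with hd
  have hidem : ∀ v, root (root v) = root v := fun v => hconst _ _ (hroot v)
  have hd0 : ∀ v, d v = 0 → root v = v := fun v h => (hroot v).dist_eq_zero_iff.1 h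
  have hadjroot : ∀ u v, H.Adj u v → root u = root v := fun u v h => hconst _ _ h.reachable
  have hpar : ∀ y, ∃ p, root y ≠ y → H.Adj y p ∧ d p + 1 = d y := by
    intro y
    by_cases h : root y = y
    · exact ⟨y, fun h' => absurd h h'⟩
    · have : d y ≠ 0 := fun h0 => h (hd0 y h0)
      obtain ⟨k, hk⟩ := Nat.exists_eq_succ_of_ne_zero this
      obtain ⟨p, hp, hr, hdp⟩ := exists_parent H (hroot y) hk
      refine ⟨p, fun _ => ⟨hp, ?_⟩⟩
      have : root p = root y := (hadjroot y p hp).symm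
      simp only [hd, this, hdp]
      exact hk.symm
  choose p hp using hpar
  set Y : Set V := {y | y ≠ root y ∧ cv y = cv (root y)} with hY
  set ce : Set V → Sym2 V → C := switched H root d Y g p base lo hi with hce
  -- Switching raises edges at a constrained vertex: its edge to the root, if any, is never owned,
  -- as `g` takes values outside `Y`.
  have hmonoY : ∀ W W' : Set V, W ⊆ W' → ∀ y ∈ Y, ∀ u, H.Adj y u →
      w (ce W s(y, u)) ≤ w (ce W' s(y, u)) := by
    intro W W' hW y hy u hyu
    have hlt := hlohi s(y, u) hyu
    simp only [hce, switched]
    split_ifs with h1 h2 h3 h4 h5 h6 h7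
    · exact le_rfl
    · exact le_rfl
    · exact hlt.le
    · obtain ⟨x, hx, hxY, hxadj, hxe⟩ := h5
      exfalso
      rcases Sym2.eq_iff.1 hxe with ⟨h, -⟩ | ⟨h, h'⟩
      · exact hy.1 (by rw [h, hidem])
      · have := hg x hxadj hxY.2
        rw [← h] at this
        refine this.2 ?_
        rw [hy.2, hadjroot _ _ hyu, h', hidem]
    · exact le_rfl
    · exact le_rfl
    · obtain ⟨x, hx, hr⟩ := h6
      exact absurd ⟨x, hW hx, hr⟩ h7
    · exact hlt.le
    · exact le_rfl
  have hantiR : ∀ W W' : Set V, W ⊆ W' → ∀ r, root r = r → ∀ u, H.Adj r u →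
      w (ce W' s(r, u)) ≤ w (ce W s(r, u)) := by
    intro W W' hW r hr u hru
    have hlt := hlohi s(r, u) hru
    have hmem : ∃ r' ∈ s(r, u), root r' = r' := ⟨r, by simp, hr⟩
    simp only [hce, switched]
    rw [if_pos hmem, if_pos hmem]
    split_ifs with h1 h2 h3 h4
    · exact le_rfl
    · exact le_rfl
    · exact hlt.le
    · obtain ⟨x, hx, hr⟩ := h4
      exact absurd ⟨x, hW hx, hr⟩ h2
    · exact le_rfl
  have hsumY : ∀ W W' : Set V, W ⊆ W' → ∀ y ∈ Y,
      weight H hlf w (ce W) y ≤ weight H hlf w (ce W') y := fun W W' hW y hy =>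
    Finset.sum_le_sum fun u hu => hmonoY W W' hW y hy u (by simpa using hu)
  have hsumR : ∀ W W' : Set V, W ⊆ W' → ∀ r, root r = r →
      weight H hlf w (ce W') r ≤ weight H hlf w (ce W) r := fun W W' hW r hr =>
    Finset.sum_le_sum fun u hu => hantiR W W' hW r hr u (by simpa using hu)
  let F : Set V →o Set V :=
    { toFun := fun W => {y | y ∈ Y ∧ weight H hlf w (ce W) (root y) ≤ weight H hlf w (ce W) y}
      monotone' := fun W W' hW y hy =>
        ⟨hy.1, ((hsumR W W' hW _ (hidem y)).trans hy.2).trans (hsumY W W' hW y hy.1)⟩ }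
  set W := F.lfp with hWdef
  have hFW : F W = W := F.map_lfp
  refine ⟨ce W, ?_, ?_, ?_⟩
  · intro e
    simp only [hce, switched]
    split_ifs <;> simp
  · intro u v huv
    simp only [hce, switched]
    rw [if_pos ⟨u, v, rfl, huv⟩]
  · intro y hy1 hy2 heq
    have hyY : y ∈ Y := ⟨hy1, hy2⟩
    have hyW : y ∈ W := by
      rw [← hFW]; exact ⟨hyY, heq.ge⟩
    have hsub : W \ {y} ⊆ W := Set.sdiff_subset
    -- No other vertex owns the edge of `y`, so removing `y` from `W` reverts this edge.
    have hlt : weight H hlf w (ce (W \ {y})) y < weight H hlf w (ce (W \ {y})) (root y) := by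
      by_cases hadj : H.Adj (root y) y
      · refine (hsumY _ _ hsub y hyY).trans_lt (heq.trans_lt ?_)
        obtain ⟨hga, hgc⟩ := hg y hadj hy2
        have hgr : root (g y) ≠ g y := by
          rw [← hadjroot _ _ hga, hidem]; exact hga.ne
        refine Finset.sum_lt_sum
          (fun u hu => hantiR _ _ hsub _ (hidem y) u (by simpa using hu))
          ⟨g y, by simpa using hga, ?_⟩
        have hn : ¬ ∃ u v, s(root y, g y) = s(u, v) ∧ d u = d v := by
          have h0 : d (root y) = 0 := by simp [hd, hidem]
          rintro ⟨u, v, he, hdd⟩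
          rcases Sym2.eq_iff.1 he with ⟨rfl, rfl⟩ | ⟨rfl, rfl⟩
          · exact hgr (hd0 _ (hdd.symm.trans h0))
          · exact hgr (hd0 _ (hdd.trans h0))
        have hmem : ∃ r' ∈ s(root y, g y), root r' = r' := ⟨root y, by simp, hidem y⟩
        simp only [hce, switched]
        rw [if_neg hn, if_neg hn, if_pos hmem, if_pos hmem,
          if_pos ⟨y, hyW, hyY, hadj, rfl⟩, if_neg]
        · exact hlohi _ hga
        · rintro ⟨x, hx, hxY, hxadj, hxe⟩
          rcases Sym2.eq_iff.1 hxe with ⟨h, h'⟩ | ⟨h, h'⟩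
          · exact hx.2 (hginj y x hadj hy2 hxadj hxY.2 h h').symm
          · exact hgr (by rw [h', hidem])
      · refine lt_of_lt_of_le ?_ (heq.le.trans (hsumR _ _ hsub _ (hidem y)))
        obtain ⟨hpa, hpd⟩ := hp y hy1.symm
        refine Finset.sum_lt_sum
          (fun u hu => hmonoY _ _ hsub y hyY u (by simpa using hu))
          ⟨p y, by simpa using hpa, ?_⟩
        have hn : ¬ ∃ u v, s(y, p y) = s(u, v) ∧ d u = d v := by
          rintro ⟨u, v, he, hdd⟩
          rcases Sym2.eq_iff.1 he with ⟨rfl, rfl⟩ | ⟨rfl, rfl⟩ <;> omega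
        have hnr : ¬ ∃ r' ∈ s(y, p y), root r' = r' := by
          rintro ⟨r', hr', hrr⟩
          rcases Sym2.mem_iff.1 hr' with rfl | rfl
          · exact hy1 hrr.symm
          · rw [← hadjroot _ _ hpa] at hrr
            exact hadj (hrr ▸ hpa.symm)
        simp only [hce, switched]
        rw [if_neg hn, if_neg hn, if_neg hnr, if_neg hnr, if_neg,
          if_pos ⟨y, hyW, hyY, hadj, rfl⟩]
        · exact hlohi _ hpa
        · rintro ⟨x, hx, hxY, hxadj, hxe⟩
          rcases Sym2.eq_iff.1 hxe with ⟨h, h'⟩ | ⟨h, h'⟩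
          · exact hx.2 h.symm
          · have := (hp x hxY.1.symm).2
            rw [← h] at this
            have h3 := hpd
            rw [h'] at h3
            omega
    have hpre : F (W \ {y}) ≤ W \ {y} := by
      intro z hz
      refine ⟨hFW ▸ F.monotone hsub hz, ?_⟩
      rintro rfl
      exact absurd hz.2 (not_le.2 hlt)
    exact (F.lfp_le hpre hyW).2 rfl

/-! ### Gluing the colourings of the layers -/

/-- The graph on the vertices of `G` whose edges are the edges of `G` inside `A`. -/
def restr (G : SimpleGraph V) (A : Set V) : SimpleGraph V where
  Adj u v := G.Adj u v ∧ u ∈ A ∧ v ∈ A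
  symm := ⟨fun _ _ h => ⟨h.1.symm, h.2.2, h.2.1⟩⟩
  loopless := ⟨fun _ h => h.1.ne rfl⟩

/-- A chosen representative of the connected component of `v`. -/
noncomputable def root (H : SimpleGraph V) (v : V) : V := (H.connectedComponentMk v).out

lemma root_reachable (H : SimpleGraph V) (v : V) : H.Reachable (root H v) v :=
  ConnectedComponent.exact (Quot.out_eq _)

lemma root_eq (H : SimpleGraph V) {u v : V} (h : H.Reachable u v) : root H u = root H v := by
  unfold root
  rw [ConnectedComponent.sound h]

/-- The colouring `(cv, ce)` breaks every small automorphism of the subgraph of `G` induced on `A`.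
Automorphisms of this subgraph are represented by permutations of `V` that preserve `A`. -/
def Good (G : SimpleGraph V) (A : Set V) (cv : V → C) (ce : Sym2 V → C) : Prop :=
  ∀ φ : Equiv.Perm V, (∀ v, φ v ∈ A ↔ v ∈ A) →
    (∀ u ∈ A, ∀ v ∈ A, (G.Adj (φ u) (φ v) ↔ G.Adj u v)) →
    (∀ v ∈ A, cv (φ v) = cv v) →
    (∀ u ∈ A, ∀ v ∈ A, G.Adj u v → ce s(φ u, φ v) = ce s(u, v)) →
    ∀ v ∈ A, ¬ G.Adj v (φ v)

/-- The subgraph of `G` induced on `A` has a good colouring from the lists. -/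
def HasGood (G : SimpleGraph V) (Lv : V → Finset C) (Le : Sym2 V → Finset C) (A : Set V) : Prop :=
  ∃ (cv : V → C) (ce : Sym2 V → C), (∀ x, cv x ∈ Lv x) ∧ (∀ e ∈ G.edgeSet, ce e ∈ Le e) ∧
    Good G A cv ce

/-- The vertices of `A` at distance `k` from `r` that belong to a component with root `r`. -/
def layer (G : SimpleGraph V) (A : Set V) (r : V) (k : ℕ) : Set V :=
  {u | u ∈ A ∧ root (restr G A) u = r ∧ (restr G A).dist (root (restr G A) u) u = k}

lemma restr_reachable_mem {G : SimpleGraph V} {A : Set V} {u v : V}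
    (h : (restr G A).Reachable u v) (hu : u ∈ A) : v ∈ A := by
  obtain ⟨q⟩ := h
  induction q with
  | nil => exact hu
  | cons hadj q ih => exact ih hadj.2.2

/-- Some colour of the root's list is shared by at most half of the neighbours `N` of the root, and
these can then be injected into the other neighbours. -/
lemma exists_root_colour (N : Finset V) (c : V → C) (L : Finset C) (hL : L.card = 2) :
    ∃ a ∈ L, ∃ g : V → V, (∀ x ∈ N, c x = a → g x ∈ N ∧ c (g x) ≠ a) ∧
      ∀ x ∈ N, ∀ x' ∈ N, c x = a → c x' = a → g x = g x' → x = x' := by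
  classical
  have key : ∃ a ∈ L, (N.filter fun x => c x = a).card ≤ (N.filter fun x => ¬ c x = a).card := by
    obtain ⟨a, b, hab, rfl⟩ := Finset.card_eq_two.1 hL
    have h1 : (N.filter fun x => c x = a).card ≤ (N.filter fun x => ¬ c x = b).card :=
      Finset.card_le_card fun x hx => by
        simp only [Finset.mem_filter] at hx ⊢
        exact ⟨hx.1, fun h => hab (hx.2.symm.trans h)⟩
    have h2 : (N.filter fun x => c x = b).card ≤ (N.filter fun x => ¬ c x = a).card :=
      Finset.card_le_card fun x hx => by
        simp only [Finset.mem_filter] at hx ⊢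
        exact ⟨hx.1, fun h => hab (h.symm.trans hx.2)⟩
    rcases le_total (N.filter fun x => c x = a).card (N.filter fun x => c x = b).card with h | h
    · exact ⟨a, by simp, h.trans h2⟩
    · exact ⟨b, by simp, h.trans h1⟩
  obtain ⟨a, ha, hcard⟩ := key
  refine ⟨a, ha, ?_⟩
  rcases isEmpty_or_nonempty V with hV | hV
  · exact ⟨id, fun x => hV.elim x, fun x => hV.elim x⟩
  obtain ⟨g, hg1, hg2⟩ := Set.Finite.exists_injOn_of_encard_le
    (s := ((N.filter fun x => c x = a : Finset V) : Set V))
    (t := ((N.filter fun x => ¬ c x = a : Finset V) : Set V)) (Finset.finite_toSet _)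
    (by rw [Set.encard_coe_eq_coe_finsetCard, Set.encard_coe_eq_coe_finsetCard]
        exact_mod_cast hcard)
  refine ⟨g, fun x hx hc => ?_, fun x hx x' hx' hc hc' h => ?_⟩
  · have := hg1 (a := x) (by simp [hx, hc])
    simpa using this
  · exact hg2 (by simp [hx, hc]) (by simp [hx', hc']) h

lemma exists_lo_hi {R : Type*} [LinearOrder R] (w : C → R) (hw : Function.Injective w)
    (L : Finset C) (hL : L.card = 2) : ∃ a ∈ L, ∃ b ∈ L, w a < w b := by
  obtain ⟨a, ha, b, hb, hab⟩ := Finset.one_lt_card.1 (by omega : 1 < L.card)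
  rcases lt_or_gt_of_ne (hw.ne hab) with h | h
  · exact ⟨a, ha, b, hb, h⟩
  · exact ⟨b, hb, a, ha, h⟩

/-- The colours embed into a linearly ordered commutative group. -/
lemma exists_weights.{u} (C : Type u) : ∃ (R : Type u) (_ : AddCommMonoid R) (_ : LinearOrder R)
    (_ : IsOrderedCancelAddMonoid R) (w : C → R), Function.Injective w := by
  classical
  let _ : LinearOrder C := linearOrderOfSTO WellOrderingRel
  refine ⟨Lex (C →₀ ℤ), inferInstance, inferInstance, inferInstance,
    fun c => toLex (Finsupp.single c 1), ?_⟩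
  intro a b h
  exact Finsupp.single_left_injective one_ne_zero (toLex.injective h)

/-- If all layers other than those consisting of a root have good colourings, so does `A`. -/
theorem exists_good_of_layers (G : SimpleGraph V) (hlf : ∀ v, (G.neighborSet v).Finite)
    (Lv : V → Finset C) (Le : Sym2 V → Finset C) (hLv : ∀ x, (Lv x).card = 2)
    (hLe : ∀ e ∈ G.edgeSet, (Le e).card = 2) (A : Set V)
    (hlay : ∀ r k, 0 < k → HasGood G Lv Le (layer G A r k)) : HasGood G Lv Le A := by
  classical
  set H := restr G A with hH
  have hHlf : ∀ v, (H.neighborSet v).Finite := fun v => (hlf v).subset fun u hu => hu.1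
  have hidem : ∀ v, root H (root H v) = root H v := fun v => root_eq H (root_reachable H v)
  set d : V → ℕ := fun v => H.dist (root H v) v with hd
  obtain ⟨R, _, _, _, w, hw⟩ := exists_weights C
  have hall : ∀ r k, ∃ (cv : V → C) (ce : Sym2 V → C), (∀ x, cv x ∈ Lv x) ∧
      (∀ e ∈ G.edgeSet, ce e ∈ Le e) ∧ (0 < k → Good G (layer G A r k) cv ce) := by
    intro r k
    by_cases hk : 0 < k
    · obtain ⟨cv, ce, h1, h2, h3⟩ := hlay r k hk
      exact ⟨cv, ce, h1, h2, fun _ => h3⟩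
    · obtain ⟨cv, ce, h1, h2, -⟩ := hlay r 1 one_pos
      exact ⟨cv, ce, h1, h2, fun h => absurd h hk⟩
  choose lcv lce hlcv hlce hgood using hall
  -- The colouring of the vertices by layers, to be changed at the roots only.
  set cv0 : V → C := fun v => lcv (root H v) (d v) v with hcv0
  choose a ha g hg hginj using fun r : V =>
    exists_root_colour (hHlf r).toFinset cv0 (Lv r) (hLv r)
  set cv : V → C := fun v => if root H v = v then a v else cv0 v with hcv
  have hcvroot : ∀ v, cv (root H v) = a (root H v) := fun v => by simp [hcv, hidem]
  have hcvne : ∀ v, root H v ≠ v → cv v = cv0 v := fun v h => by simp [hcv, h]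
  have hnbr : ∀ v u, H.Adj (root H v) u → root H u ≠ u := by
    intro v u h
    rw [← root_eq H h.reachable, hidem]
    exact h.ne
  have hlh : ∀ e, ∃ lo hi, e ∈ G.edgeSet → lo ∈ Le e ∧ hi ∈ Le e ∧ w lo < w hi := by
    intro e
    by_cases he : e ∈ G.edgeSet
    · obtain ⟨lo, h1, hi, h2, h3⟩ := exists_lo_hi w hw (Le e) (hLe e he)
      exact ⟨lo, hi, fun _ => ⟨h1, h2, h3⟩⟩
    · induction e with
      | h u v => exact ⟨cv u, cv u, fun h => absurd h he⟩
  choose lo hi hlohi using hlh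
  have hHG : ∀ e ∈ H.edgeSet, e ∈ G.edgeSet := by
    intro e he
    induction e with
    | h u v => exact he.1
  set base : Sym2 V → C := fun e => lce (root H e.out.1) (d e.out.1) e with hbase
  have hbase_eq : ∀ u v, root H u = root H v → d u = d v →
      base s(u, v) = lce (root H u) (d u) s(u, v) := by
    intro u v h1 h2
    have : (s(u, v) : Sym2 V).out.1 ∈ s(u, v) := Sym2.out_fst_mem _
    simp only [hbase]
    rcases Sym2.mem_iff.1 this with h | h <;> rw [h]
    rw [h1, h2]
  have hgadj : ∀ x, H.Adj (root H x) x → x ∈ (hHlf (root H x)).toFinset := fun x h => by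
    simpa using h
  have hgcol : ∀ x, H.Adj (root H x) x → cv x = cv (root H x) → cv0 x = a (root H x) :=
    fun x h hc => by rw [← hcvne x (hnbr x x h), hc, hcvroot]
  obtain ⟨ce, hce1, hce2, hce3⟩ := exists_separating H hHlf w (root H) (root_reachable H)
    (fun u v => root_eq H) cv base lo hi (fun e he => (hlohi e (hHG e he)).2.2)
    (fun x => g (root H x) x)
    (fun x h hc => by
      obtain ⟨h1, h2⟩ := hg (root H x) x (hgadj x h) (hgcol x h hc)
      have h1' : H.Adj (root H x) (g (root H x) x) := by simpa using h1
      refine ⟨h1', ?_⟩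
      rw [hcvne _ (hnbr x _ h1'), hcvroot]
      exact h2)
    (fun x x' h hc h' hc' hr hgg => by
      refine hginj (root H x) x (hgadj x h) x' (hr ▸ hgadj x' h') (hgcol x h hc)
        (hr ▸ hgcol x' h' hc') ?_
      simpa [← hr] using hgg)
  refine ⟨cv, ce, ?_, ?_, ?_⟩
  · intro x
    simp only [hcv]
    split_ifs
    · exact ha x
    · exact hlcv _ _ _
  · intro e he
    rcases hce1 e with h | h | h <;> rw [h]
    · exact (hlohi e he).1
    · exact (hlohi e he).2.1
    · exact hlce _ _ e he
  · intro φ hφA hφadj hφcv hφce v hv hsmall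
    have hφH : ∀ u v, H.Adj (φ u) (φ v) ↔ H.Adj u v := by
      intro u v
      constructor
      · rintro ⟨h1, h2, h3⟩
        have hu := (hφA u).1 h2
        have hv := (hφA v).1 h3
        exact ⟨(hφadj u hu v hv).1 h1, hu, hv⟩
      · rintro ⟨h1, h2, h3⟩
        exact ⟨(hφadj u h2 v h3).2 h1, (hφA u).2 h2, (hφA v).2 h3⟩
    let ψ : H ≃g H := ⟨φ, fun {u v} => hφH u v⟩
    have hψ : ∀ u, ψ u = φ u := fun _ => rfl
    set r := root H v with hr
    have hrv : H.Reachable r v := root_reachable H v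
    have hrA : r ∈ A := restr_reachable_mem hrv.symm hv
    have hadjH : H.Adj v (φ v) := ⟨hsmall, hv, (hφA v).2 hv⟩
    have hrr : root H r = r := hidem v
    have hφr : H.Reachable r (φ r) :=
      (hrv.trans hadjH.reachable).trans (Reachable.map ψ.toHom hrv.symm)
    have hrootφ : root H (φ r) = r := by rw [← root_eq H hφr, hrr]
    -- The root has the same colour and weight as its image.
    have hfix : φ r = r := by
      by_contra hne
      refine hce3 (φ r) (by rwa [hrootφ]) (by rw [hrootφ]; exact hφcv r hrA) ?_
      rw [hrootφ]
      unfold weight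
      symm
      refine Finset.sum_bij (fun u _ => φ u) ?_ ?_ ?_ ?_
      · intro u hu
        simpa [hφH] using hu
      · intro u _ u' _ h
        exact φ.injective h
      · intro u hu
        refine ⟨φ.symm u, ?_, by simp⟩
        have hu' : H.Adj (φ r) u := by simpa using hu
        have := (hφH r (φ.symm u)).1 (by simpa using hu')
        simpa using this
      · intro u hu
        have hu' : H.Adj r u := by simpa using hu
        rw [hφce r hrA u hu'.2.2 hu'.1]
    have hψr : ψ r = r := hfix
    have hroot_iff : ∀ u, root H (φ u) = r ↔ root H u = r := by
      intro u
      constructor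
      · intro h
        have h1 : H.Reachable (ψ r) (ψ u) := by
          rw [hψr, ← h]; exact root_reachable H (φ u)
        rw [← root_eq H (Iso.reachable_iff.1 h1), hrr]
      · intro h
        have h1 : H.Reachable r u := h ▸ root_reachable H u
        have h2 : H.Reachable (ψ r) (ψ u) := Iso.reachable_iff.2 h1
        rw [hψr] at h2
        rw [← hψ, ← root_eq H h2, hrr]
    have hdφ : ∀ u, root H u = r → d (φ u) = d u := by
      intro u h
      have h1 : H.Reachable r u := h ▸ root_reachable H u
      have h2 := dist_map ψ h1
      rw [hψr, hψ] at h2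
      simp only [hd, (hroot_iff u).2 h, h, h2]
    have hvr : v ≠ r := by
      intro h
      rw [h, hfix] at hsmall
      exact hsmall.ne rfl
    have hdpos : 0 < d v := hrv.pos_dist_of_ne hvr.symm
    have hmemlay : ∀ u, u ∈ layer G A r (d v) ↔ u ∈ A ∧ root H u = r ∧ d u = d v := fun u => Iff.rfl
    have hlayA : ∀ u, u ∈ layer G A r (d v) → cv u = lcv r (d v) u := by
      intro u hu
      obtain ⟨-, h2, h3⟩ := (hmemlay u).1 hu
      have hne : root H u ≠ u := by
        intro h
        have : d u = 0 := by simp [hd, h]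
        omega
      rw [hcvne u hne]
      simp only [hcv0, h2, h3]
    have hlayE : ∀ u u', u ∈ layer G A r (d v) → u' ∈ layer G A r (d v) →
        ce s(u, u') = lce r (d v) s(u, u') := by
      intro u u' hu hu'
      obtain ⟨-, h2, h3⟩ := (hmemlay u).1 hu
      obtain ⟨-, h2', h3'⟩ := (hmemlay u').1 hu'
      rw [hce2 u u' (h3.trans h3'.symm), hbase_eq u u' (h2.trans h2'.symm) (h3.trans h3'.symm),
        h2, h3]
    have hφlay : ∀ u, φ u ∈ layer G A r (d v) ↔ u ∈ layer G A r (d v) := by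
      intro u
      rw [hmemlay, hmemlay, hφA, hroot_iff]
      constructor
      · rintro ⟨h1, h2, h3⟩
        exact ⟨h1, h2, by rw [← hdφ u h2, h3]⟩
      · rintro ⟨h1, h2, h3⟩
        exact ⟨h1, h2, by rw [hdφ u h2, h3]⟩
    refine hgood r (d v) hdpos φ hφlay (fun u hu u' hu' => hφadj u hu.1 u' hu'.1) ?_ ?_ v
      ((hmemlay v).2 ⟨hv, rfl, rfl⟩) hsmall
    · intro u hu
      rw [← hlayA u hu, ← hlayA _ ((hφlay u).2 hu)]
      exact hφcv u hu.1
    · intro u hu u' hu' h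
      rw [← hlayE u u' hu hu', ← hlayE _ _ ((hφlay u).2 hu) ((hφlay u').2 hu')]
      exact hφce u hu.1 u' hu'.1 h

theorem hasGood_finite (G : SimpleGraph V) (hlf : ∀ v, (G.neighborSet v).Finite)
    (Lv : V → Finset C) (Le : Sym2 V → Finset C) (hLv : ∀ x, (Lv x).card = 2)
    (hLe : ∀ e ∈ G.edgeSet, (Le e).card = 2) (A : Finset V) :
    HasGood G Lv Le (A : Set V) := by
  classical
  induction A using Finset.strongInduction with
  | H A ih =>
    refine exists_good_of_layers G hlf Lv Le hLv hLe A fun r k hk => ?_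
    have hsub : layer G (A : Set V) r k ⊆ A := fun u hu => hu.1
    rcases (layer G (A : Set V) r k).eq_empty_or_nonempty with he | ⟨u, hu⟩
    · rw [he]
      have h1 : ∀ x, ∃ c, c ∈ Lv x := fun x =>
        Finset.card_pos.1 (by rw [hLv x]; norm_num)
      choose cv hcv using h1
      have h2 : ∀ e, ∃ c, e ∈ G.edgeSet → c ∈ Le e := fun e => by
        by_cases h : e ∈ G.edgeSet
        · obtain ⟨c, hc⟩ := Finset.card_pos.1 (by rw [hLe e h]; norm_num : 0 < (Le e).card)
          exact ⟨c, fun _ => hc⟩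
        · exact ⟨cv e.out.1, fun h' => absurd h' h⟩
      choose ce hce using h2
      exact ⟨cv, ce, hcv, hce, fun φ _ _ _ _ v hv => absurd hv (Set.notMem_empty v)⟩
    · have hfin := A.finite_toSet.subset hsub
      have := ih hfin.toFinset ?_
      · rwa [hfin.coe_toFinset] at this
      · have hrA : r ∈ A := by
          have := restr_reachable_mem (root_reachable (restr G (A : Set V)) u).symm hu.1
          rw [hu.2.1] at this
          exact this
        rw [← Finset.coe_ssubset, hfin.coe_toFinset]
        refine ⟨hsub, fun h => ?_⟩
        have h3 := (h hrA).2
        rw [h3.1, dist_self] at h3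
        omega

end SmallAut

/-- Theorem 2: every locally finite graph with no `K₂` component and any lists of length 2
on vertices and edges admit a total colouring from the lists which breaks every small
automorphism. -/
theorem stmt_3 {V : Type*} (G : SimpleGraph V)
    (hlf : ∀ v : V, (G.neighborSet v).Finite)
    (hK2 : ∀ K : G.ConnectedComponent,
      ¬ Nonempty ((G.induce K.supp) ≃g (⊤ : SimpleGraph (Fin 2))))
    (C : Type*) (Lv : V → Finset C) (Le : Sym2 V → Finset C)
    (hLv : ∀ x : V, (Lv x).card = 2)
    (hLe : ∀ e ∈ G.edgeSet, (Le e).card = 2) :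
    ∃ (cv : V → C) (ce : Sym2 V → C),
      (∀ x : V, cv x ∈ Lv x) ∧
      (∀ e ∈ G.edgeSet, ce e ∈ Le e) ∧
      ∀ φ : G ≃g G, (∃ v, G.Adj v (φ v)) →
        (∃ v, cv v ≠ cv (φ v)) ∨
        (∃ u v, G.Adj u v ∧ ce s(u, v) ≠ ce s(φ u, φ v)) := by
  obtain ⟨cv, ce, h1, h2, h3⟩ :=
    SmallAut.exists_good_of_layers G hlf Lv Le hLv hLe Set.univ fun r k _ => by
      have hfin : (SmallAut.layer G Set.univ r k).Finite := by
        refine (SmallAut.layer_finite (SmallAut.restr G Set.univ)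
          (fun v => (hlf v).subset fun u hu => hu.1) r k).subset ?_
        rintro u ⟨-, rfl, h⟩
        exact ⟨SmallAut.root_reachable _ u, h⟩
      have := SmallAut.hasGood_finite G hlf Lv Le hLv hLe hfin.toFinset
      rwa [hfin.coe_toFinset] at this
  refine ⟨cv, ce, h1, h2, ?_⟩
  rintro φ ⟨v, hv⟩
  by_contra! hcon
  exact h3 φ.toEquiv (fun _ => by simp) (fun u _ v _ => φ.map_adj_iff)
    (fun v _ => (hcon.1 v).symm) (fun u _ v _ h => (hcon.2 u v h).symm) v (Set.mem_univ v) hv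
end

section
/- Let G be a locally finite simple graph with no connected component isomorphic to the complete graph K₂. Then there exists a total colouring of G using at most 2 colours on vertices and edges which breaks every small automorphism of G. -/
/-!
A small automorphism maps some component of `G` to itself, so the components can be coloured
independently, and `G` may be assumed connected. Colour so that one vertex `r` is fixed by every
colour-preserving automorphism. Such automorphisms then preserve each sphere `S n` around `r`, and
only those moving a vertex to a neighbour inside the same sphere remain to be excluded.

**Spheres with `n ≥ 2`.** A vertex `v` of `S n` carries two bits: its colour, and the common colour
of all its edges to `S (n - 1)`. Three of the four combinations encode a partition of `S n` into
classes `0, 1, 2`. Choosing the partition with as few monochromatic edges as possible (a maximum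
3-cut), every vertex has at least as many neighbours in the cyclically next class as in its own.
Hence the number of `true` edges from `v` to the next class can be prescribed to be any proper
greedy colouring of the graph of monochromatic edges, and these numbers distinguish adjacent
vertices of the same class (`exists_layer`).

**The root and its neighbours.** The root is `false` and all its edges are `false`. The graph
induced on the finite set `S 1` is coloured by induction. To recognise the root, the induction
carries the extra condition of `Good b`: no vertex has colour `b` and only edges of colour `b`.
By the condition `Good false` for the graph on `S 1`, and because classes in further spheres with
colour `false` have `true` edges downwards, no other vertex looks like the root. Breaking ties
between maximum cuts in favour of a small class `2` yields `Good true` for the whole graph, and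
exchanging the two colours gives `Good false` (`Good.flip`), which closes the induction.
-/

section layers

open Finset

/-! ### Colouring one sphere -/

/-- Greedy proper colouring of a finite graph, in which the colour of a vertex is at most its
degree. -/
theorem exists_greedy {V : Type*} (R : V → V → Prop) (hR : ∀ u v, R u v → R v u)
    (S : Finset V) : open Classical in
    ∃ k : V → ℕ, (∀ u ∈ S, k u ≤ #{w ∈ S | R u w ∧ w ≠ u}) ∧
      ∀ u ∈ S, ∀ v ∈ S, u ≠ v → R u v → k u ≠ k v := by
  classical
  induction S using Finset.induction_on with
  | empty => exact ⟨fun _ => 0, by simp, by simp⟩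
  | insert v T hv ih =>
    obtain ⟨k, h1, h2⟩ := ih
    set N := {w ∈ T | R v w ∧ w ≠ v} with hN
    have hlt : #(N.image k) < #(range (#N + 1)) := by
      rw [card_range]; exact Nat.lt_succ_of_le card_image_le
    obtain ⟨m, hm, hm'⟩ := exists_mem_notMem_of_card_lt_card hlt
    have hne : ∀ w ∈ T, w ≠ v := fun w hw h => hv (h ▸ hw)
    refine ⟨Function.update k v m, ?_, ?_⟩
    · intro u hu
      rcases mem_insert.1 hu with rfl | hu
      · rw [Function.update_self]
        refine (Nat.lt_succ_iff.1 (mem_range.1 hm)).trans (card_le_card ?_)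
        exact filter_subset_filter _ (subset_insert _ _)
      · rw [Function.update_of_ne (hne u hu)]
        exact (h1 u hu).trans (card_le_card (filter_subset_filter _ (subset_insert _ _)))
    · intro a ha b hb hab hr
      rcases mem_insert.1 ha with rfl | ha' <;> rcases mem_insert.1 hb with rfl | hb'
      · exact absurd rfl hab
      · rw [Function.update_self, Function.update_of_ne (hne b hb')]
        rintro rfl
        exact hm' (mem_image_of_mem _ (mem_filter.2 ⟨hb', hr, hne b hb'⟩))
      · rw [Function.update_self, Function.update_of_ne (hne a ha')]
        rintro rfl
        exact hm' (mem_image_of_mem _ (mem_filter.2 ⟨ha', hR _ _ hr, hne a ha'⟩))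
      · rw [Function.update_of_ne (hne a ha'), Function.update_of_ne (hne b hb')]
        exact h2 a ha' b hb' hab hr

/-- A partition of a finite set into three classes such that every vertex has at least as many
neighbours in the cyclically next class as in its own, and strictly more if it is in class `2`. -/
theorem exists_partition {V : Type*} (G : SimpleGraph V) (S : Finset V) : open Classical in
    ∃ p : V → Fin 3, ∀ v ∈ S,
      #{w ∈ S | G.Adj v w ∧ p w = p v} ≤ #{w ∈ S | G.Adj v w ∧ p w = p v + 1} ∧
      (p v = 2 →
        #{w ∈ S | G.Adj v w ∧ p w = p v} < #{w ∈ S | G.Adj v w ∧ p w = p v + 1}) := by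
  classical
  -- Monochromatic ordered pairs change by an even number when one vertex is moved, so adding the
  -- size of class `2` only breaks ties.
  let Φ : (V → Fin 3) → ℕ := fun p =>
    (∑ u ∈ S, ∑ w ∈ S, if G.Adj u w ∧ p u = p w then 1 else 0) +
      ∑ u ∈ S, if p u = 2 then 1 else 0
  obtain ⟨p, hp⟩ : ∃ p, ∀ q, Φ p ≤ Φ q := by
    obtain ⟨p, hp⟩ := (wellFounded_lt (α := ℕ)).has_min (Set.range Φ) ⟨_, fun _ => 0, rfl⟩
    obtain ⟨⟨p, rfl⟩, hp⟩ := And.intro hp.1 hp.2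
    exact ⟨p, fun q => not_lt.1 (hp _ ⟨q, rfl⟩)⟩
  -- The contribution of a single vertex `v` to `Φ`.
  have key : ∀ q : V → Fin 3, ∀ v ∈ S, Φ q =
      (∑ u ∈ S.erase v, ∑ w ∈ S.erase v, if G.Adj u w ∧ q u = q w then 1 else 0) +
      (∑ u ∈ S.erase v, if q u = 2 then 1 else 0) +
      2 * #{w ∈ S | G.Adj v w ∧ q w = q v} + if q v = 2 then 1 else 0 := by
    intro q v hv
    have e1 : #{w ∈ S | G.Adj v w ∧ q w = q v} =
        ∑ w ∈ S.erase v, if G.Adj v w ∧ q v = q w then 1 else 0 := by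
      rw [card_filter, ← add_sum_erase _ _ hv]
      simp [eq_comm]
    have e2 : ∀ u ∈ S.erase v, (∑ w ∈ S, if G.Adj u w ∧ q u = q w then 1 else 0) =
        (if G.Adj v u ∧ q v = q u then 1 else 0) +
          ∑ w ∈ S.erase v, if G.Adj u w ∧ q u = q w then 1 else 0 := by
      intro u _
      rw [← add_sum_erase _ _ hv]
      simp only [G.adj_comm u v, eq_comm (a := q u) (b := q v)]
    have e3 : (∑ w ∈ S, if G.Adj v w ∧ q v = q w then 1 else 0) =
        ∑ w ∈ S.erase v, if G.Adj v w ∧ q v = q w then 1 else 0 := by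
      rw [← add_sum_erase _ _ hv]; simp
    simp only [Φ]
    rw [e1, ← add_sum_erase S _ hv, sum_congr rfl e2, sum_add_distrib, e3,
      ← add_sum_erase S (fun u => if q u = 2 then 1 else 0) hv]
    ring
  refine ⟨p, fun v hv => ?_⟩
  have h := hp (Function.update p v (p v + 1))
  rw [key p v hv, key _ v hv] at h
  have hne : ∀ w ∈ S.erase v, Function.update p v (p v + 1) w = p w := fun w hw =>
    Function.update_of_ne (ne_of_mem_erase hw) _ _
  have f1 : (∑ u ∈ S.erase v, ∑ w ∈ S.erase v,
      if G.Adj u w ∧ Function.update p v (p v + 1) u = Function.update p v (p v + 1) w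
        then 1 else 0) =
      ∑ u ∈ S.erase v, ∑ w ∈ S.erase v, if G.Adj u w ∧ p u = p w then 1 else 0 :=
    sum_congr rfl fun u hu => sum_congr rfl fun w hw => by rw [hne u hu, hne w hw]
  have f2 : (∑ u ∈ S.erase v, if Function.update p v (p v + 1) u = 2 then 1 else 0) =
      ∑ u ∈ S.erase v, if p u = 2 then 1 else 0 :=
    sum_congr rfl fun u hu => by rw [hne u hu]
  have f3 : #{w ∈ S | G.Adj v w ∧
      Function.update p v (p v + 1) w = Function.update p v (p v + 1) v} =
      #{w ∈ S | G.Adj v w ∧ p w = p v + 1} := by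
    congr 1
    refine filter_congr fun w _ => and_congr_right fun hw => ?_
    rw [Function.update_self, Function.update_of_ne hw.ne']
  rw [f1, f2, f3, Function.update_self] at h
  constructor
  · split_ifs at h <;> omega
  · intro h2
    rw [if_pos h2, if_neg (by rw [h2]; decide)] at h
    omega

/-- Classes `p` and edge colours `e` on a finite set `S` such that adjacent vertices of the same
class are distinguished by the number of `true` edges to the cyclically next class, while every
vertex of class `2` has a `false` edge inside `S`. -/
theorem exists_layer {V : Type*} (G : SimpleGraph V) (S : Finset V) : open Classical in
    ∃ (p : V → Fin 3) (e : V → V → Bool), (∀ u v, e u v = e v u) ∧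
      (∀ v ∈ S, p v = 2 → ∃ w ∈ S, G.Adj v w ∧ e v w = false) ∧
      ∀ u ∈ S, ∀ v ∈ S, G.Adj u v → p u = p v →
        #{w ∈ S | G.Adj u w ∧ p w = p u + 1 ∧ e u w = true} ≠
        #{w ∈ S | G.Adj v w ∧ p w = p v + 1 ∧ e v w = true} := by
  classical
  obtain ⟨p, hp⟩ := exists_partition G S
  obtain ⟨k, hk, hk'⟩ := exists_greedy (fun u v => G.Adj u v ∧ p v = p u)
    (fun u v h => ⟨h.1.symm, h.2.symm⟩) S
  have hk2 : ∀ u ∈ S, k u ≤ #{w ∈ S | G.Adj u w ∧ p w = p u} := fun u hu =>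
    (hk u hu).trans (card_le_card fun w => by simp +contextual)
  have hN : ∀ u, ∃ N : Finset V, u ∈ S →
      N ⊆ {w ∈ S | G.Adj u w ∧ p w = p u + 1} ∧ #N = k u := by
    intro u
    by_cases hu : u ∈ S
    · obtain ⟨N, h⟩ := exists_subset_card_eq ((hk2 u hu).trans (hp u hu).1)
      exact ⟨N, fun _ => h⟩
    · exact ⟨∅, fun h => absurd h hu⟩
  choose N hN using hN
  -- An edge between two classes is controlled by its endpoint in the cyclically earlier class.
  let e : V → V → Bool := fun u w =>
    decide ((p w = p u + 1 ∧ w ∈ N u) ∨ (p u = p w + 1 ∧ u ∈ N w))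
  have he : ∀ u w, p w = p u + 1 → (e u w = true ↔ w ∈ N u) := by
    intro u w h
    have : ¬ p u = p w + 1 := by
      rw [h]; generalize p u = a; revert a; decide
    simp [e, h]
    intro h'; rw [h] at this; exact absurd h' this
  have hc : ∀ u ∈ S, #{w ∈ S | G.Adj u w ∧ p w = p u + 1 ∧ e u w = true} = k u := by
    intro u hu
    rw [← (hN u hu).2]
    congr 1
    ext w
    constructor
    · intro h
      obtain ⟨_, _, h1, h2⟩ := mem_filter.1 h
      exact (he u w h1).1 h2
    · intro h
      obtain ⟨a, b, c⟩ := mem_filter.1 ((hN u hu).1 h)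
      exact mem_filter.2 ⟨a, b, c, (he u w c).2 h⟩
  refine ⟨p, e, fun u v => by simp only [e, or_comm], ?_, ?_⟩
  · intro v hv h2
    have hlt := (hk2 v hv).trans_lt ((hp v hv).2 h2)
    rw [← (hN v hv).2] at hlt
    obtain ⟨w, hw, hw'⟩ := exists_mem_notMem_of_card_lt_card hlt
    obtain ⟨a, b, c⟩ := mem_filter.1 hw
    exact ⟨w, a, b, by rw [← Bool.not_eq_true, he v w c]; exact hw'⟩
  · intro u hu v hv huv hpe
    rw [hc u hu, hc v hv]
    exact hk' u hu v hv huv.ne ⟨huv, hpe.symm⟩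

/-! ### Good colourings -/

/-- The graph on all of `V` whose edges are the edges of `G` inside `s`. Keeping the vertex type
lets an automorphism of `G` preserving `s` act on it without any transport. -/
def restr {V : Type*} (G : SimpleGraph V) (s : Set V) : SimpleGraph V where
  Adj u v := G.Adj u v ∧ u ∈ s ∧ v ∈ s
  symm := ⟨fun _ _ h => ⟨h.1.symm, h.2.2, h.2.1⟩⟩
  loopless := ⟨fun _ h => h.1.ne rfl⟩

/-- An automorphism of `G` preserving `s`, as an automorphism of `restr G s`. -/
def restrIso {V : Type*} {G : SimpleGraph V} {s : Set V} (φ : G ≃g G)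
    (h : ∀ v, φ v ∈ s ↔ v ∈ s) : restr G s ≃g restr G s where
  toEquiv := φ.toEquiv
  map_rel_iff' := by
    intro u v
    exact and_congr φ.map_adj_iff (and_congr (h u) (h v))

/-- `G` has a total colouring with colours `true`, `false` that no small automorphism preserves and
in which no vertex of colour `b` has all its edges of colour `b`. In particular isolated vertices
have colour `!b`. Edge colours are functions of two vertices, symmetric on the edges of `G`. -/
def Good {V : Type*} (b : Bool) (G : SimpleGraph V) : Prop :=
  ∃ (cv : V → Bool) (ce : V → V → Bool),
    (∀ u v, G.Adj u v → ce u v = ce v u) ∧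
    (∀ v, cv v = b → ∃ u, G.Adj v u ∧ ce v u = !b) ∧
    ∀ φ : G ≃g G, (∀ v, cv (φ v) = cv v) →
      (∀ u v, G.Adj u v → ce (φ u) (φ v) = ce u v) → ∀ v, ¬ G.Adj v (φ v)

theorem Good.flip {V : Type*} {b : Bool} {G : SimpleGraph V} (h : Good b G) : Good (!b) G := by
  obtain ⟨cv, ce, h1, h2, h3⟩ := h
  refine ⟨fun v => !cv v, fun u v => !ce u v, fun u v h => by simp only [h1 u v h], ?_, ?_⟩
  · intro v hv
    obtain ⟨u, hu, hc⟩ := h2 v (by simpa using hv)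
    exact ⟨u, hu, by simp [hc]⟩
  · intro φ a b
    exact h3 φ (fun v => by simpa using a v) (fun u v h => by simpa using b u v h)

/-- Good colourings of the components combine to one of `G`, because a small automorphism maps the
component where it is small to itself. -/
theorem Good.of_forall_restr {V : Type*} {c₀ : Bool} {G : SimpleGraph V}
    (h : ∀ K : G.ConnectedComponent, Good c₀ (restr G K.supp)) : Good c₀ G := by
  choose cv ce h1 h2 h3 using h
  let κ := G.connectedComponentMk
  have hκ : ∀ {u v}, G.Adj u v → κ u = κ v := fun h =>
    SimpleGraph.ConnectedComponent.connectedComponentMk_eq_of_adj h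
  have hadj : ∀ {u v}, G.Adj u v → (restr G (κ u).supp).Adj u v := fun {u v} h =>
    ⟨h, rfl, (hκ h).symm⟩
  refine ⟨fun v => cv (κ v) v, fun u v => ce (κ u) u v, ?_, ?_, ?_⟩
  · intro u v h
    simp only [← hκ h]
    exact h1 _ u v (hadj h)
  · intro v hv
    obtain ⟨u, hu, hc⟩ := h2 _ v hv
    exact ⟨u, hu.1, hc⟩
  · intro φ a b v hv
    have hφ : ∀ w, κ (φ w) = κ v ↔ κ w = κ v := by
      intro w
      rw [hκ hv]
      simp only [κ, SimpleGraph.ConnectedComponent.eq]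
      rw [φ.reachable_iff, ← SimpleGraph.ConnectedComponent.eq,
        ← SimpleGraph.ConnectedComponent.eq]
      exact Eq.congr_right (hκ hv)
    refine h3 (κ v) (restrIso φ hφ) ?_ ?_ v (hadj hv)
    · intro w
      change cv (κ v) (φ w) = cv (κ v) w
      by_cases hw : κ w = κ v
      · have := a w
        simpa only [hw, (hφ w).2 hw] using this
      -- Vertices outside the component are isolated in its graph, hence all of colour `!c₀`.
      · have hout : ∀ x, κ x ≠ κ v → cv (κ v) x = !c₀ := by
          intro x hx
          refine Bool.eq_not.2 fun hc => ?_
          obtain ⟨u, hu, -⟩ := h2 _ x hc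
          exact hx hu.2.1
        rw [hout w hw, hout (φ w) (mt (hφ w).1 hw)]
    · intro u w huw
      have hu : κ u = κ v := huw.2.1
      change ce (κ v) (φ u) (φ w) = ce (κ v) u w
      have := b u w huw.1
      simpa only [hu, (hφ u).2 hu] using this

/-! ### Colouring a component from its root -/

/-- The colouring of a graph all of whose edges lie in the component of `r`, from a good colouring
of the graph on the neighbours of `r`. -/
theorem Good.step {V : Type*} {G : SimpleGraph V} (r : V)
    (hlf : ∀ v, (G.neighborSet v).Finite)
    (hreach : ∀ u v, G.Adj u v → G.Reachable r u)
    (hH : Good false (restr G (G.neighborSet r))) : Good true G := by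
  classical
  obtain ⟨cH, eH, hH1, hH2, hH3⟩ := hH
  -- Vertices outside the component of `r` have `d v = 0` as well; they are isolated.
  set d : V → ℕ := G.dist r with hd
  have hd0 : ∀ {u v}, G.Adj u v → d u = 0 → u = r := fun h h0 =>
    ((hreach _ _ h).dist_eq_zero_iff.1 h0).symm
  have hd1 : ∀ v, d v = 1 ↔ G.Adj r v := fun v => SimpleGraph.dist_eq_one_iff_adj
  have hdown : ∀ v, d v ≠ 0 → ∃ w, G.Adj v w ∧ d w + 1 = d v := by
    intro v hv
    obtain ⟨p, hp⟩ := SimpleGraph.exists_walk_of_dist_ne_zero hv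
    rw [← p.length_reverse] at hp
    cases hq : p.reverse with
    | nil => exact absurd (G.dist_self) hv
    | @cons _ w _ h q =>
      refine ⟨w, h, ?_⟩
      rw [hq, SimpleGraph.Walk.length_cons] at hp
      have h1 : d w ≤ q.reverse.length := SimpleGraph.dist_le _
      rw [SimpleGraph.Walk.length_reverse] at h1
      obtain ⟨p', hp'⟩ := (hreach w v h.symm).exists_walk_length_eq_dist
      have h2 : d v ≤ (p'.concat h.symm).length := SimpleGraph.dist_le _
      rw [SimpleGraph.Walk.length_concat] at h2
      simp only [hd] at *
      omega
  have hfin : ∀ n, {v | d v = n + 1}.Finite := by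
    intro n
    induction n with
    | zero => exact (hlf r).subset fun v hv => (hd1 v).1 hv
    | succ n ih =>
      refine (ih.biUnion fun w _ => hlf w).subset fun v hv => ?_
      have hv' : d v = n + 1 + 1 := hv
      obtain ⟨w, hw, hdw⟩ := hdown v (by omega)
      exact Set.mem_biUnion (show d w = n + 1 by omega) hw.symm
  have hS : ∀ n, ∃ S : Finset V, 2 ≤ n → ∀ v, v ∈ S ↔ d v = n := by
    rintro (_ | n)
    · exact ⟨∅, fun h => by omega⟩
    · exact ⟨(hfin n).toFinset, fun _ v => by simp⟩
  choose S hS using hS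
  choose p e he hp hcount using fun n => exists_layer G (S n)
  -- Class `0` means colour `false` and `true` edges downwards, class `1` means `true` and `false`,
  -- class `2` means `true` and `true`.
  let P : V → Fin 3 := fun v => p (d v) v
  let lab : V → Bool := fun v => if d v = 1 then false else decide (P v ≠ 1)
  let cv : V → Bool := fun v =>
    if d v = 0 then false else if d v = 1 then cH v else decide (P v ≠ 0)
  let ce : V → V → Bool := fun u v =>
    if d u < d v then lab v else if d v < d u then lab u
      else if d u = 1 then eH u v else e (d u) u v
  have ce_down : ∀ {v w}, d w < d v → ce v w = lab v := by
    intro v w h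
    simp only [ce, if_neg h.not_gt, if_pos h]
  have ce_one : ∀ {v w}, d v = 1 → d w = 1 → ce v w = eH v w := by
    intro v w h h'
    simp [ce, h, h']
  have ce_layer : ∀ {v w}, d v = d w → 2 ≤ d v → ce v w = e (d v) v w := by
    intro v w h h'
    simp only [ce, h, lt_irrefl, if_false]
    rw [if_neg (by omega)]
  have cv_layer : ∀ {v}, 2 ≤ d v → cv v = decide (P v ≠ 0) := by
    intro v h
    simp only [cv]
    rw [if_neg (by omega), if_neg (by omega)]
  have lab_layer : ∀ {v}, 2 ≤ d v → lab v = decide (P v ≠ 1) := by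
    intro v h
    simp only [lab]
    rw [if_neg (by omega)]
  have hsymm : ∀ u v, G.Adj u v → ce u v = ce v u := by
    intro u v h
    rcases lt_trichotomy (d u) (d v) with hlt | heq | hlt
    · simp only [ce, if_pos hlt, if_neg hlt.not_gt]
    · by_cases h1 : d u = 1
      · rw [ce_one h1 (heq ▸ h1), ce_one (heq ▸ h1) h1]
        exact hH1 u v ⟨h, (hd1 u).1 h1, (hd1 v).1 (heq ▸ h1)⟩
      · simp only [ce, heq, lt_irrefl, if_false]
        rw [heq] at h1
        rw [if_neg h1, if_neg h1, he]
    · simp only [ce, if_pos hlt, if_neg hlt.not_gt]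
  -- No vertex of positive distance looks like the root.
  have hroot : ∀ v, d v ≠ 0 → cv v = false → ∃ w, G.Adj v w ∧ ce v w = true := by
    intro v h0 hc
    by_cases h1 : d v = 1
    · have hc' : cH v = false := by simpa [cv, h1] using hc
      obtain ⟨w, hw, hew⟩ := hH2 v hc'
      exact ⟨w, hw.1, by rw [ce_one h1 ((hd1 w).2 hw.2.2), hew]; rfl⟩
    · have h2 : 2 ≤ d v := by omega
      obtain ⟨w, hw, hdw⟩ := hdown v h0
      refine ⟨w, hw, ?_⟩
      rw [ce_down (by omega), lab_layer h2]
      rw [cv_layer h2] at hc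
      have : P v = 0 := by simpa using hc
      simp [this]
  refine ⟨cv, ce, hsymm, ?_, ?_⟩
  · intro v hc
    have h0 : d v ≠ 0 := fun h => by simp [cv, h] at hc
    obtain ⟨w, hw, hdw⟩ := hdown v h0
    by_cases h1 : d v = 1
    · exact ⟨w, hw, by rw [ce_down (by omega)]; simp [lab, h1]⟩
    · have h2 : 2 ≤ d v := by omega
      by_cases hP : P v = 1
      · exact ⟨w, hw, by rw [ce_down (by omega), lab_layer h2]; simp [hP]⟩
      · rw [cv_layer h2] at hc
        have hP0 : P v ≠ 0 := by simpa using hc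
        have hP2 : P v = 2 := by
          revert hP hP0; generalize P v = a; revert a; decide
        obtain ⟨x, hx, hvx, hex⟩ := hp (d v) v ((hS _ h2 v).2 rfl) hP2
        exact ⟨x, hvx, by rw [ce_layer ((hS _ h2 x).1 hx).symm h2, hex]; rfl⟩
  · intro φ hcφ heφ v hv
    have hr : ∃ x, G.Adj r x := by
      by_cases h0 : d v = 0
      · exact ⟨_, hd0 hv h0 ▸ hv⟩
      · obtain ⟨q⟩ := hreach _ _ hv
        cases q with
        | nil => exact absurd G.dist_self h0
        | cons h _ => exact ⟨_, h⟩
    obtain ⟨x, hx⟩ := hr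
    have hφr : φ r = r := by
      have hadj : G.Adj (φ r) (φ x) := φ.map_adj_iff.2 hx
      refine hd0 hadj ?_
      by_contra h0
      have hdr : d r = 0 := G.dist_self
      obtain ⟨w, hw, hew⟩ := hroot (φ r) h0 (by rw [hcφ]; simp [cv, hdr])
      obtain ⟨y, rfl⟩ := φ.surjective w
      have hy : G.Adj r y := φ.map_adj_iff.1 hw
      have hy1 := (hd1 y).2 hy
      rw [heφ r y hy, hsymm r y hy, ce_down (by omega)] at hew
      simp [lab, hy1] at hew
    have hle : ∀ (ψ : G ≃g G), ψ r = r → ∀ u, G.Reachable r u → d (ψ u) ≤ d u := by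
      intro ψ hψ u hu
      obtain ⟨q, hq⟩ := hu.exists_walk_length_eq_dist
      have := SimpleGraph.dist_le (q.map ψ.toHom)
      rw [SimpleGraph.Walk.length_map, hq] at this
      have h' : G.dist (ψ r) (ψ u) ≤ G.dist r u := this
      rwa [hψ] at h'
    have hdφ : ∀ {u w}, G.Adj u w → d (φ u) = d u := by
      intro u w h
      refine le_antisymm (hle φ hφr u (hreach u w h)) ?_
      have := hle φ.symm (φ.symm_apply_eq.2 hφr.symm) (φ u) (hreach _ (φ w) (φ.map_adj_iff.2 h))
      simpa using this
    have hdv := hdφ hv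
    have h0 : d v ≠ 0 := fun h0 => by
      have e1 := hd0 hv h0
      have e2 := hd0 hv.symm (hdv.trans h0)
      exact hv.ne (e1.trans e2.symm)
    by_cases h1 : d v = 1
    -- In the first sphere `φ` restricts to a small automorphism of the graph on it.
    · have hN : ∀ u, φ u ∈ G.neighborSet r ↔ u ∈ G.neighborSet r := by
        intro u
        have := φ.map_adj_iff (v := r) (w := u)
        rwa [hφr] at this
      refine hH3 (restrIso φ hN) ?_ ?_ v ⟨hv, (hd1 v).1 h1, (hd1 _).1 (hdv.trans h1)⟩
      · intro u
        change cH (φ u) = cH u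
        by_cases hu : u ∈ G.neighborSet r
        · have hu1 := (hd1 u).2 hu
          have hu2 := (hd1 (φ u)).2 ((hN u).2 hu)
          simpa [cv, hu1, hu2] using hcφ u
        · have hout : ∀ x, x ∉ G.neighborSet r → cH x = true := by
            intro x hx
            by_contra hc
            obtain ⟨w, hw, -⟩ := hH2 x (by simpa using hc)
            exact hx hw.2.1
          rw [hout u hu, hout _ (mt (hN u).1 hu)]
      · intro u w huw
        have hu := (hd1 u).2 huw.2.1
        have hw := (hd1 w).2 huw.2.2
        have := heφ u w huw.1
        rwa [ce_one hu hw, ce_one ((hdφ huw.1).trans hu) ((hdφ huw.1.symm).trans hw)] at this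
    · have h2 : 2 ≤ d v := by omega
      -- Vertex colours and downward edges determine the classes.
      have hPφ : ∀ u, d u = d v → P (φ u) = P u := by
        intro u hu
        obtain ⟨w, hw, hdw⟩ := hdown u (by omega)
        have hu2 : 2 ≤ d u := by omega
        have hu3 : 2 ≤ d (φ u) := by rw [hdφ hw]; exact hu2
        have c1 := hcφ u
        have c2 := heφ u w hw
        rw [cv_layer hu2, cv_layer hu3] at c1
        rw [ce_down (v := u) (by omega),
          ce_down (v := φ u) (by rw [hdφ hw, hdφ hw.symm]; omega),
          lab_layer hu2, lab_layer hu3] at c2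
        revert c1 c2
        generalize P u = a
        generalize P (φ u) = b
        revert a b; decide
      have hSφ : φ v ∈ S (d v) := (hS _ h2 _).2 hdv
      have hp' : p (d v) (φ v) = p (d v) v := by
        have := hPφ v rfl
        simpa only [P, hdv] using this
      refine hcount (d v) v ((hS _ h2 v).2 rfl) (φ v) hSφ hv hp'.symm ?_
      have himp : ∀ w, G.Adj v w → d w = d v →
          ((p (d v) (φ w) = p (d v) (φ v) + 1 ∧ e (d v) (φ v) (φ w) = true) ↔
            (p (d v) w = p (d v) v + 1 ∧ e (d v) v w = true)) := by
        intro w hw hdw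
        have hdw' : d (φ w) = d v := (hdφ hw.symm).trans hdw
        have h3 := heφ v w hw
        rw [ce_layer hdw.symm h2, ce_layer (hdv.trans hdw'.symm) (hdv ▸ h2), hdv] at h3
        have h4 := hPφ w hdw
        simp only [P, hdw, hdw'] at h4
        rw [h3, h4, hp']
      refine Finset.card_bij (fun w _ => φ w) ?_ (fun _ _ _ _ h => φ.injective h) ?_
      · intro w hw
        obtain ⟨hwS, hvw, hw'⟩ := mem_filter.1 hw
        have hdw := (hS _ h2 w).1 hwS
        exact mem_filter.2 ⟨(hS _ h2 _).2 ((hdφ hvw.symm).trans hdw),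
          φ.map_adj_iff.2 hvw, (himp w hvw hdw).2 hw'⟩
      · intro y hy
        obtain ⟨w, rfl⟩ := φ.surjective y
        obtain ⟨hwS, hvw', hw'⟩ := mem_filter.1 hy
        have hvw : G.Adj v w := φ.map_adj_iff.1 hvw'
        have hdw : d w = d v := (hdφ hvw.symm).symm.trans ((hS _ h2 _).1 hwS)
        exact ⟨w, mem_filter.2 ⟨(hS _ h2 _).2 hdw, hvw, (himp w hvw hdw).1 hw'⟩, rfl⟩

/-! ### Assembling the colouring -/

/-- Reduction to the graphs on neighbourhoods; subgraphs of `G` are allowed because the root is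
chosen inside the graph of one component. -/
theorem Good.of_nbhd {V : Type*} {G : SimpleGraph V} (hlf : ∀ v, (G.neighborSet v).Finite)
    (h : ∀ G' ≤ G, ∀ r, Good true (restr G' (G'.neighborSet r))) : Good true G := by
  refine Good.of_forall_restr fun K => ?_
  obtain ⟨r, rfl⟩ := K.exists_rep
  have hle : restr G (G.connectedComponentMk r).supp ≤ G := fun _ _ huv => huv.1
  refine Good.step r (fun v => (hlf v).subset fun w hw => hw.1) ?_ (h _ hle r).flip
  intro u v huv
  obtain ⟨q⟩ : G.Reachable r u := (SimpleGraph.ConnectedComponent.exact huv.2.1).symm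
  clear huv hle
  induction q with
  | nil => exact SimpleGraph.Reachable.refl _
  | @cons a b c hab q ih =>
    have hc : G.connectedComponentMk a = G.connectedComponentMk b :=
      SimpleGraph.ConnectedComponent.connectedComponentMk_eq_of_adj hab
    have hadj : (restr G (G.connectedComponentMk a).supp).Adj a b := ⟨hab, rfl, hc.symm⟩
    refine hadj.reachable.trans ?_
    rw [hc]
    exact ih

/-- Induction on the number of non-isolated vertices: the graph on the neighbours of `r` does not
contain `r`. -/
theorem good_of_finite {V : Type*} (n : ℕ) : ∀ G : SimpleGraph V, G.support.Finite →
    G.support.ncard ≤ n → Good true G := by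
  induction n with
  | zero =>
    intro G hf hn
    have h0 : G.support = ∅ := (Set.ncard_eq_zero hf).1 (Nat.le_zero.1 hn)
    have hadj : ∀ u v, ¬ G.Adj u v := fun u v h => by
      have : u ∈ G.support := ⟨v, h⟩
      simp [h0] at this
    exact ⟨fun _ => false, fun _ _ => false, fun _ _ _ => rfl, fun v h => by simp at h,
      fun _ _ _ v => hadj _ _⟩
  | succ n ih =>
    intro G hf hn
    refine Good.of_nbhd (fun v => hf.subset fun w hw => ⟨v, hw.symm⟩) fun G' hG r => ?_
    have hsub : (restr G' (G'.neighborSet r)).support ⊆ G.support \ {r} := by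
      rintro u ⟨w, hw⟩
      exact ⟨⟨w, hG hw.1⟩, fun h => G'.ne_of_adj hw.2.1 h.symm⟩
    refine ih _ (hf.sdiff.subset hsub) ?_
    by_cases hr : r ∈ G.support
    · have h1 := Set.ncard_le_ncard hsub hf.sdiff
      rw [Set.ncard_sdiff_singleton_of_mem hr] at h1
      omega
    · have : (restr G' (G'.neighborSet r)).support = ∅ := by
        refine Set.eq_empty_of_forall_notMem ?_
        rintro u ⟨w, hw⟩
        exact hr ⟨u, hG hw.2.1⟩
      simp [this]

end layers

/-- Non-list corollary: every locally finite graph with no `K₂` component admits a total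
colouring with at most 2 colours on vertices and edges breaking every small automorphism. -/
theorem stmt_4 {V : Type*} (G : SimpleGraph V)
    (hlf : ∀ v : V, (G.neighborSet v).Finite)
    (hK2 : ∀ K : G.ConnectedComponent,
      ¬ Nonempty ((G.induce K.supp) ≃g (⊤ : SimpleGraph (Fin 2)))) :
    ∃ (cv : V → Fin 2) (ce : Sym2 V → Fin 2),
      ∀ φ : G ≃g G, (∃ v, G.Adj v (φ v)) →
        (∃ v, cv v ≠ cv (φ v)) ∨
        (∃ u v, G.Adj u v ∧ ce s(u, v) ≠ ce s(φ u, φ v)) := by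
  have hgood : Good true G := by
    refine Good.of_nbhd hlf fun G' hG r => good_of_finite _ _ ?_ le_rfl
    refine (hlf r).subset ?_
    rintro u ⟨w, hw⟩
    exact hG hw.2.1
  obtain ⟨cv, ce, hsymm, -, hbreak⟩ := hgood
  let ι : Bool → Fin 2 := fun b => if b then 1 else 0
  have hι : Function.Injective ι := by decide
  let ce' : Sym2 V → Fin 2 := fun x => ι (ce x.out.1 x.out.2)
  have hce : ∀ u v, G.Adj u v → ce' s(u, v) = ι (ce u v) := by
    intro u v huv
    have h : s(s(u, v).out.1, s(u, v).out.2) = s(u, v) := Quot.out_eq _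
    rcases Sym2.eq_iff.1 h with ⟨h1, h2⟩ | ⟨h1, h2⟩
    · simp only [ce', h1, h2]
    · simp only [ce', h1, h2, hsymm u v huv]
  refine ⟨fun v => ι (cv v), ce', ?_⟩
  rintro φ ⟨v, hv⟩
  by_contra! hcon
  refine hbreak φ (fun w => hι (hcon.1 w).symm) (fun u w huw => hι ?_) v hv
  have := hcon.2 u w huw
  rw [hce u w huw, hce _ _ (φ.map_adj_iff.2 huw)] at this
  exact this.symm
end

section
/- For every edge colouring of the complete graph K₃ with at most 2 colours, there exists a small automorphism of K₃ that is preserved by the colouring. Consequently the small list distinguishing index of K₃ is greater than 2 (and hence D'_{l,s}(K₃) = 3). -/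
/-!
Among the three edges of `K₃`, two receive the same colour by the pigeonhole principle. These two
edges `{a, w}` and `{b, w}` share the vertex `w`, and the transposition of `a` and `b` exchanges
them while fixing the edge `{a, b}`, so it preserves the colouring; it is small since it moves `a`
to its neighbour `b`. This is `exists_small_preserving`. For the claim about lists, give every edge
the same list, consisting of all of `Fin 2`.
-/

/-- The transposition of two vertices of `K₃`, as a graph automorphism. -/
def swapIso (a b : Fin 3) : (⊤ : SimpleGraph (Fin 3)) ≃g (⊤ : SimpleGraph (Fin 3)) where
  toEquiv := Equiv.swap a b
  map_rel_iff' := by simp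

theorem swapIso_preserves {C : Type} (c : Sym2 (Fin 3) → C) (a b w : Fin 3)
    (hab : a ≠ b) (haw : a ≠ w) (hbw : b ≠ w) (h : c s(a, w) = c s(b, w)) (u v : Fin 3)
    (huv : u ≠ v) : c s(u, v) = c s(swapIso a b u, swapIso a b v) := by
  have ha : swapIso a b a = b := Equiv.swap_apply_left a b
  have hb : swapIso a b b = a := Equiv.swap_apply_right a b
  have hw : swapIso a b w = w := Equiv.swap_apply_of_ne_of_ne haw.symm hbw.symm
  have cover : ∀ x : Fin 3, x = a ∨ x = b ∨ x = w := by omega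
  rcases cover u with rfl | rfl | rfl <;> rcases cover v with rfl | rfl | rfl <;>
    simp_all [Sym2.eq_swap]

theorem exists_small_preserving (c : Sym2 (Fin 3) → Fin 2) :
    ∃ φ : (⊤ : SimpleGraph (Fin 3)) ≃g (⊤ : SimpleGraph (Fin 3)),
      (∃ v, (⊤ : SimpleGraph (Fin 3)).Adj v (φ v)) ∧
      ∀ u v : Fin 3, (⊤ : SimpleGraph (Fin 3)).Adj u v → c s(u, v) = c s(φ u, φ v) := by
  have key : ∀ a b w : Fin 3, a ≠ b → a ≠ w → b ≠ w → c s(a, w) = c s(b, w) →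
      ∃ φ : (⊤ : SimpleGraph (Fin 3)) ≃g (⊤ : SimpleGraph (Fin 3)),
        (∃ v, (⊤ : SimpleGraph (Fin 3)).Adj v (φ v)) ∧
        ∀ u v : Fin 3, (⊤ : SimpleGraph (Fin 3)).Adj u v → c s(u, v) = c s(φ u, φ v) := by
    intro a b w hab haw hbw h
    refine ⟨swapIso a b, ⟨a, ?_⟩, fun u v huv =>
      swapIso_preserves c a b w hab haw hbw h u v huv.ne⟩
    have ha : swapIso a b a = b := Equiv.swap_apply_left a b
    simpa [ha] using hab
  have pigeonhole : c s(0, 2) = c s(1, 2) ∨ c s(0, 1) = c s(2, 1) ∨ c s(1, 0) = c s(2, 0) := by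
    rw [Sym2.eq_swap (a := 2) (b := 1), Sym2.eq_swap (a := 1) (b := 0),
      Sym2.eq_swap (a := 2) (b := 0)]
    omega
  rcases pigeonhole with h | h | h
  · exact key 0 1 2 (by decide) (by decide) (by decide) h
  · exact key 0 2 1 (by decide) (by decide) (by decide) h
  · exact key 1 2 0 (by decide) (by decide) (by decide) h

/-- Sharpness for K₃: every edge colouring with at most 2 colours preserves some small
automorphism; consequently lists of length 2 never suffice, i.e. `D'_{l,s}(K₃) > 2`. -/
theorem stmt_5 :
    (∀ c : Sym2 (Fin 3) → Fin 2,
      ∃ φ : ((⊤ : SimpleGraph (Fin 3))) ≃g ((⊤ : SimpleGraph (Fin 3))),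
        (∃ v, ((⊤ : SimpleGraph (Fin 3))).Adj v (φ v)) ∧
        ∀ u v : Fin 3, ((⊤ : SimpleGraph (Fin 3))).Adj u v → c s(u, v) = c s(φ u, φ v)) ∧
    ¬ (∀ (C : Type) (L : Sym2 (Fin 3) → Finset C),
        (∀ e ∈ ((⊤ : SimpleGraph (Fin 3))).edgeSet, (L e).card = 2) →
        ∃ c : Sym2 (Fin 3) → C,
          (∀ e ∈ ((⊤ : SimpleGraph (Fin 3))).edgeSet, c e ∈ L e) ∧
          ∀ φ : ((⊤ : SimpleGraph (Fin 3))) ≃g ((⊤ : SimpleGraph (Fin 3))), (∃ v, ((⊤ : SimpleGraph (Fin 3))).Adj v (φ v)) →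
            ∃ u v, ((⊤ : SimpleGraph (Fin 3))).Adj u v ∧ c s(u, v) ≠ c s(φ u, φ v)) := by
  refine ⟨exists_small_preserving, fun H => ?_⟩
  obtain ⟨c, -, hc⟩ := H (Fin 2) (fun _ => Finset.univ) (by simp)
  obtain ⟨φ, hsmall, hpres⟩ := exists_small_preserving c
  obtain ⟨u, v, huv, hne⟩ := hc φ hsmall
  exact hne (hpres u v huv)
end

section
/- For every edge colouring of the complete graph K₄ with at most 2 colours, there exists a small automorphism of K₄ that is preserved by the colouring. Consequently the small list distinguishing index of K₄ is greater than 2 (and hence D'_{l,s}(K₄) = 3). -/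
/-!
Every permutation of the four vertices is an automorphism of K₄, and it is small as soon as it is
not the identity. A 2-colouring of the edges is the same thing as a graph on four vertices, so the
first claim says that no graph on four vertices is asymmetric. Apart from the path with three edges,
each such graph has two vertices with the same neighbours outside the pair, and interchanging them
is an automorphism; the path is preserved by its reversal, a product of two disjoint
transpositions. `exists_symmetry` verifies this on the six edge colours.

The second claim follows by giving every edge the full list of two colours.
-/

/-- For the colours `xij` of the edges `{i, j}` of K₄, one of the six transpositions (first six
disjuncts) or one of the three products of two disjoint transpositions (last three) preserves the
colouring. Each disjunct lists the two equalities that the permutation requires. -/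
lemma exists_symmetry : ∀ x01 x02 x03 x12 x13 x23 : Fin 2,
    (x02 = x12 ∧ x03 = x13) ∨ (x01 = x12 ∧ x03 = x23) ∨ (x01 = x13 ∧ x02 = x23) ∨
    (x01 = x02 ∧ x13 = x23) ∨ (x01 = x03 ∧ x12 = x23) ∨ (x02 = x03 ∧ x12 = x13) ∨
    (x02 = x13 ∧ x03 = x12) ∨ (x01 = x23 ∧ x03 = x12) ∨ (x01 = x23 ∧ x02 = x13) := by
  decide

lemma exists_perm_preserving (c : Sym2 (Fin 4) → Fin 2) :
    ∃ σ : Equiv.Perm (Fin 4), (∃ v, v ≠ σ v) ∧ ∀ u v, u ≠ v → c s(u, v) = c s(σ u, σ v) := by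
  have h10 : s((1 : Fin 4), 0) = s(0, 1) := Sym2.eq_swap
  have h20 : s((2 : Fin 4), 0) = s(0, 2) := Sym2.eq_swap
  have h30 : s((3 : Fin 4), 0) = s(0, 3) := Sym2.eq_swap
  have h21 : s((2 : Fin 4), 1) = s(1, 2) := Sym2.eq_swap
  have h31 : s((3 : Fin 4), 1) = s(1, 3) := Sym2.eq_swap
  have h32 : s((3 : Fin 4), 2) = s(2, 3) := Sym2.eq_swap
  -- It suffices to describe `σ` by its four values.
  have key : ∀ (σ : Equiv.Perm (Fin 4)) (a b d e : Fin 4),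
      σ 0 = a → σ 1 = b → σ 2 = d → σ 3 = e →
      c s(0, 1) = c s(a, b) → c s(0, 2) = c s(a, d) → c s(0, 3) = c s(a, e) →
      c s(1, 2) = c s(b, d) → c s(1, 3) = c s(b, e) → c s(2, 3) = c s(d, e) →
      ∀ u v, u ≠ v → c s(u, v) = c s(σ u, σ v) := by
    rintro σ a b d e rfl rfl rfl rfl e01 e02 e03 e12 e13 e23 u v huv
    rcases lt_or_gt_of_ne huv with h | h
    · fin_cases u <;> fin_cases v <;> first | assumption | (exact absurd h (by decide))
    · rw [Sym2.eq_swap, Sym2.eq_swap (a := σ u)]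
      fin_cases u <;> fin_cases v <;> first | assumption | (exact absurd h (by decide))
  rcases exists_symmetry (c s(0, 1)) (c s(0, 2)) (c s(0, 3)) (c s(1, 2)) (c s(1, 3)) (c s(2, 3))
    with ⟨p, q⟩ | ⟨p, q⟩ | ⟨p, q⟩ | ⟨p, q⟩ | ⟨p, q⟩ | ⟨p, q⟩ | ⟨p, q⟩ | ⟨p, q⟩ | ⟨p, q⟩
  · refine ⟨Equiv.swap 0 1, by decide, key _ 1 0 2 3 (by decide) (by decide) (by decide) (by decide)
      ?_ ?_ ?_ ?_ ?_ ?_⟩ <;> simp only [h10, h20, h30, h21, h31, h32, p, q]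
  · refine ⟨Equiv.swap 0 2, by decide, key _ 2 1 0 3 (by decide) (by decide) (by decide)
      (by decide) ?_ ?_ ?_ ?_ ?_ ?_⟩ <;> simp only [h10, h20, h30, h21, h31, h32, p, q]
  · refine ⟨Equiv.swap 0 3, by decide, key _ 3 1 2 0 (by decide) (by decide) (by decide)
      (by decide) ?_ ?_ ?_ ?_ ?_ ?_⟩ <;> simp only [h10, h20, h30, h21, h31, h32, p, q]
  · refine ⟨Equiv.swap 1 2, by decide, key _ 0 2 1 3 (by decide) (by decide) (by decide)
      (by decide) ?_ ?_ ?_ ?_ ?_ ?_⟩ <;> simp only [h10, h20, h30, h21, h31, h32, p, q]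
  · refine ⟨Equiv.swap 1 3, by decide, key _ 0 3 2 1 (by decide) (by decide) (by decide)
      (by decide) ?_ ?_ ?_ ?_ ?_ ?_⟩ <;> simp only [h10, h20, h30, h21, h31, h32, p, q]
  · refine ⟨Equiv.swap 2 3, by decide, key _ 0 1 3 2 (by decide) (by decide) (by decide)
      (by decide) ?_ ?_ ?_ ?_ ?_ ?_⟩ <;> simp only [h10, h20, h30, h21, h31, h32, p, q]
  · refine ⟨Equiv.swap 0 1 * Equiv.swap 2 3, by decide, key _ 1 0 3 2 (by decide) (by decide) (by decide)
      (by decide) ?_ ?_ ?_ ?_ ?_ ?_⟩ <;> simp only [h10, h20, h30, h21, h31, h32, p, q]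
  · refine ⟨Equiv.swap 0 2 * Equiv.swap 1 3, by decide, key _ 2 3 0 1 (by decide) (by decide) (by decide)
      (by decide) ?_ ?_ ?_ ?_ ?_ ?_⟩ <;> simp only [h10, h20, h30, h21, h31, h32, p, q]
  · refine ⟨Equiv.swap 0 3 * Equiv.swap 1 2, by decide, key _ 3 2 1 0 (by decide) (by decide) (by decide)
      (by decide) ?_ ?_ ?_ ?_ ?_ ?_⟩ <;> simp only [h10, h20, h30, h21, h31, h32, p, q]


/-- Sharpness for K₄: every edge colouring with at most 2 colours preserves some small
automorphism; consequently lists of length 2 never suffice, i.e. `D'_{l,s}(K₄) > 2`. -/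
theorem stmt_6 :
    (∀ c : Sym2 (Fin 4) → Fin 2,
      ∃ φ : ((⊤ : SimpleGraph (Fin 4))) ≃g ((⊤ : SimpleGraph (Fin 4))),
        (∃ v, ((⊤ : SimpleGraph (Fin 4))).Adj v (φ v)) ∧
        ∀ u v : Fin 4, ((⊤ : SimpleGraph (Fin 4))).Adj u v → c s(u, v) = c s(φ u, φ v)) ∧
    ¬ (∀ (C : Type) (L : Sym2 (Fin 4) → Finset C),
        (∀ e ∈ ((⊤ : SimpleGraph (Fin 4))).edgeSet, (L e).card = 2) →
        ∃ c : Sym2 (Fin 4) → C,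
          (∀ e ∈ ((⊤ : SimpleGraph (Fin 4))).edgeSet, c e ∈ L e) ∧
          ∀ φ : ((⊤ : SimpleGraph (Fin 4))) ≃g ((⊤ : SimpleGraph (Fin 4))), (∃ v, ((⊤ : SimpleGraph (Fin 4))).Adj v (φ v)) →
            ∃ u v, ((⊤ : SimpleGraph (Fin 4))).Adj u v ∧ c s(u, v) ≠ c s(φ u, φ v)) := by
  have main : ∀ c : Sym2 (Fin 4) → Fin 2,
      ∃ φ : ((⊤ : SimpleGraph (Fin 4))) ≃g ((⊤ : SimpleGraph (Fin 4))),
        (∃ v, ((⊤ : SimpleGraph (Fin 4))).Adj v (φ v)) ∧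
        ∀ u v : Fin 4, ((⊤ : SimpleGraph (Fin 4))).Adj u v → c s(u, v) = c s(φ u, φ v) := by
    intro c
    obtain ⟨σ, ⟨v, hv⟩, hσ⟩ := exists_perm_preserving c
    exact ⟨SimpleGraph.Iso.completeGraph σ, ⟨v, hv⟩, fun u v huv => hσ u v huv⟩
  refine ⟨main, fun hlist => ?_⟩
  obtain ⟨c, -, hc⟩ := hlist (Fin 2) (fun _ => Finset.univ) (fun _ _ => by simp)
  obtain ⟨φ, hsmall, hpres⟩ := main c
  obtain ⟨u, v, huv, hne⟩ := hc φ hsmall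
  exact hne (hpres u v huv)
end

section
/- For every edge colouring of the cycle C₅ with at most 2 colours, there exists a small automorphism of C₅ that is preserved by the colouring. Consequently the small list distinguishing index of C₅ is greater than 2 (and hence D'_{l,s}(C₅) = 3). -/
/-!
The automorphisms used are the reflections `v ↦ k - v` of `C₅ = ℤ/5`. Writing `e i` for the edge
`{i, i + 1}`, such a reflection sends `e i` to `e (k - 1 - i)`, and since `5` is odd it swaps the
endpoints of one edge, so it is small (`reflection_small`). In a colouring with two colours, some
colour class has at most two edges, and a set of at most two edges of the pentagon is
invariant under a reflection; this is a check of the 32 colourings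
(`exists_symmetric`). For the list version, all lists are taken equal to the full set `Fin 2`.
-/

/-- The reflection `v ↦ k - v` of the pentagon. -/
def reflection (k : Fin 5) : SimpleGraph.cycleGraph 5 ≃g SimpleGraph.cycleGraph 5 where
  toEquiv := Equiv.subLeft k
  map_rel_iff' := by
    intro a b
    simp only [SimpleGraph.cycleGraph_adj, Equiv.subLeft_apply, sub_sub_sub_cancel_left]
    exact or_comm

theorem reflection_apply (k v : Fin 5) : reflection k v = k - v := rfl

theorem reflection_small (k : Fin 5) :
    ∃ v, (SimpleGraph.cycleGraph 5).Adj v (reflection k v) := by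
  simp only [SimpleGraph.cycleGraph_adj, reflection_apply]
  revert k
  decide

/-- Every 2-colouring of the edges of the pentagon, with `i` standing for the edge `{i, i + 1}`,
is invariant under a reflection. -/
theorem exists_symmetric : ∀ f : Fin 5 → Fin 2, ∃ k : Fin 5, ∀ i, f i = f (k - 1 - i) := by
  decide

theorem exists_small_preserved (c : Sym2 (Fin 5) → Fin 2) :
    ∃ φ : (SimpleGraph.cycleGraph 5) ≃g (SimpleGraph.cycleGraph 5),
      (∃ v, (SimpleGraph.cycleGraph 5).Adj v (φ v)) ∧
      ∀ u v : Fin 5, (SimpleGraph.cycleGraph 5).Adj u v → c s(u, v) = c s(φ u, φ v) := by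
  obtain ⟨k, hk⟩ := exists_symmetric fun i => c s(i, i + 1)
  have key : ∀ i : Fin 5, c s(i, i + 1) = c s(k - i, k - (i + 1)) := by
    intro i
    have h := hk i
    have h1 : k - 1 - i = k - (i + 1) := by abel
    have h2 : k - (i + 1) + 1 = k - i := by abel
    simp only [h1, h2] at h
    rw [h, Sym2.eq_swap]
  refine ⟨reflection k, reflection_small k, fun u v huv => ?_⟩
  simp only [reflection_apply]
  rcases SimpleGraph.cycleGraph_adj.mp huv with h | h
  · obtain rfl : u = v + 1 := by rw [← h]; abel
    rw [Sym2.eq_swap, key v, Sym2.eq_swap]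
  · obtain rfl : v = u + 1 := by rw [← h]; abel
    exact key u

/-- Sharpness for C₅: every edge colouring with at most 2 colours preserves some small
automorphism; consequently lists of length 2 never suffice, i.e. `D'_{l,s}(C₅) > 2`. -/
theorem stmt_9 :
    (∀ c : Sym2 (Fin 5) → Fin 2,
      ∃ φ : (SimpleGraph.cycleGraph 5) ≃g (SimpleGraph.cycleGraph 5),
        (∃ v, (SimpleGraph.cycleGraph 5).Adj v (φ v)) ∧
        ∀ u v : Fin 5, (SimpleGraph.cycleGraph 5).Adj u v → c s(u, v) = c s(φ u, φ v)) ∧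
    ¬ (∀ (C : Type) (L : Sym2 (Fin 5) → Finset C),
        (∀ e ∈ (SimpleGraph.cycleGraph 5).edgeSet, (L e).card = 2) →
        ∃ c : Sym2 (Fin 5) → C,
          (∀ e ∈ (SimpleGraph.cycleGraph 5).edgeSet, c e ∈ L e) ∧
          ∀ φ : (SimpleGraph.cycleGraph 5) ≃g (SimpleGraph.cycleGraph 5), (∃ v, (SimpleGraph.cycleGraph 5).Adj v (φ v)) →
            ∃ u v, (SimpleGraph.cycleGraph 5).Adj u v ∧ c s(u, v) ≠ c s(φ u, φ v)) := by
  refine ⟨exists_small_preserved, fun H => ?_⟩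
  obtain ⟨c, -, hc⟩ := H (Fin 2) (fun _ => Finset.univ) (fun _ _ => by simp)
  obtain ⟨φ, hφ, hpres⟩ := exists_small_preserved c
  obtain ⟨u, v, huv, hne⟩ := hc φ hφ
  exact hne (hpres u v huv)
end
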